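/- arXiv:2106.15982 — 4 statements merged into one kernel-verified Lean document; each statement's English description precedes it below -/
import Mathlib

section
/- Let N ≥ 3, 1 ≤ p < N, and q > p* := Np/(N−p). Set S := inf{‖u‖_{D^{1,p}}^p : u ∈ D^{1,p}(ℤ^N), ‖u‖_q = 1}. Let {u_n} ⊂ D^{1,p}(ℤ^N) be a minimizing sequence, i.e. ‖u_n‖_q = 1 for all n and ‖u_n‖_{D^{1,p}}^p → S. Then there exists a sequence {i_n} ⊂ ℤ^N such that the translated sequence v_n(i) := u_n(i + i_n) contains a subsequence converging in the D^{1,p}-norm to some v ∈ D^{1,p}(ℤ^N) with ‖v‖_q = 1 and ‖v‖_{D^{1,p}}^p = S; in particular the infimum S is attained. -/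
/-!
The proof is a concentration-compactness argument that becomes elementary on the lattice, where
`ℓ^r ⊆ ℓ^q` for `r < q` and pointwise compactness is Tychonoff's theorem.

Write `r = p*`. The Sobolev inequality `‖u‖_r ≤ C ‖u‖_D` (`sobolev`) bounds a minimizing sequence in
`ℓ^r`, and gives `S > 0` (`exists_lower_bound`). Since `‖u‖_q ^ q ≤ ‖u‖_∞ ^ (q - r) ‖u‖_r ^ r`, the
sup norms stay above some `δ > 0` (`exists_nonvanishing`). After translating a point where
`|u_n| ≥ δ` to the origin, a subsequence converges pointwise to some `v ≠ 0`. The Brezis–Lieb lemma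
(`brezis_lieb`), applied to the functions in `ℓ^q` and to their gradients in `ℓ^p`, splits the mass as
`a + (1 - a)`, `a = ‖v‖_q ^ q > 0`, and the energy as `‖v‖_D ^ p + lim ‖v_n - v‖_D ^ p = S`. By
homogeneity (`homog_le`) these energies are at least `S a ^ (p/q)` and `S (1 - a) ^ (p/q)`; as
`p/q < 1`, strict subadditivity (`no_split`) forces `a = 1`. Then `‖v‖_D ^ p = S`, and the remaining
energy `lim ‖v_n - v‖_D ^ p` is zero.

The Sobolev inequality is obtained as in the continuous case: the grid-lines lemma for counting
measure together with telescoping along coordinate lines yields `p = 1`, and the general case follows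
by applying it to `|u| ^ γ`, `γ = p (N - 1) / (N - p)`, and using Hölder's inequality.
-/

open Filter Topology

noncomputable section

/-- The vertex set of the `N`-dimensional integer lattice graph. -/
abbrev ZN (N : ℕ) := Fin N → ℤ

/-- Adjacency in the lattice graph `ℤ^N`: `x ∼ y` iff `Σ_k |x k - y k| = 1`. -/
def adj {N : ℕ} (x y : ZN N) : Prop := (∑ k, |x k - y k|) = 1

/-- `|∇u(x)|_p^p = Σ_{y∼x} |u(y)-u(x)|^p`. -/
def gradPow {N : ℕ} (p : ℝ) (u : ZN N → ℝ) (x : ZN N) : ℝ :=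
  ∑' y : {y : ZN N // adj x y}, |u y.1 - u x| ^ p

/-- `‖u‖_{D^{1,p}}^p = Σ_x |∇u(x)|_p^p`. -/
def DSumPow {N : ℕ} (p : ℝ) (u : ZN N → ℝ) : ℝ := ∑' x, gradPow p u x

/-- `‖u‖_{D^{1,p}}`. -/
def Dnorm {N : ℕ} (p : ℝ) (u : ZN N → ℝ) : ℝ := DSumPow p u ^ (1 / p)

/-- `‖u‖_q = (Σ_x |u(x)|^q)^{1/q}`. -/
def lpNorm {N : ℕ} (q : ℝ) (u : ZN N → ℝ) : ℝ := (∑' x, |u x| ^ q) ^ (1 / q)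

/-- `u ∈ ℓ^q(ℤ^N)`. -/
def Memlp {N : ℕ} (q : ℝ) (u : ZN N → ℝ) : Prop := Summable fun x => |u x| ^ q

/-- `u ∈ D^{1,p}(ℤ^N)`, identified with `{u ∈ ℓ^{p*} : ‖u‖_{D^{1,p}} < ∞}`. -/
def MemD {N : ℕ} (p pstar : ℝ) (u : ZN N → ℝ) : Prop :=
  Memlp pstar u ∧ Summable fun x => gradPow p u x

/-! ### The Sobolev inequality for p = 1 -/

open MeasureTheory in
lemma pi_count_eq (N : ℕ) :
    Measure.pi (fun _ : Fin N => (Measure.count : Measure ℤ)) = Measure.count := by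
  refine Measure.ext_of_singleton fun a => ?_
  rw [Measure.pi_singleton]
  simp

/-- The grid-lines (Loomis–Whitney type) inequality on the lattice: the version for product measures,
applied to counting measure. -/
lemma gridlines {N : ℕ} (hN : 2 ≤ N) (f : ZN N → ENNReal) :
    ∑' x, ∏ k, (∑' t : ℤ, f (Function.update x k t)) ^ ((1 : ℝ) / ((N : ℝ) - 1))
      ≤ (∑' x, f x) ^ ((N : ℝ) / ((N : ℝ) - 1)) := by
  have h2 : (2 : ℝ) ≤ N := by exact_mod_cast hN
  have hp : Real.HolderConjugate (Fintype.card (Fin N) : ℝ) ((N : ℝ) / ((N : ℝ) - 1)) := by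
    rw [Fintype.card_fin, Real.holderConjugate_iff]
    refine ⟨by linarith, ?_⟩
    have : (N : ℝ) - 1 ≠ 0 := by linarith
    field_simp
    ring
  have := MeasureTheory.lintegral_prod_lintegral_pow_le
    (fun _ : Fin N => (MeasureTheory.Measure.count : MeasureTheory.Measure ℤ)) hp
    (f := f) (measurable_of_countable f)
  simpa only [pi_count_eq, MeasureTheory.lintegral_count, Fintype.card_fin] using this

/-- Telescoping along a line for a sequence vanishing at `+∞`. -/
lemma enorm_le_line (w : ℤ → ℝ) (hw : Tendsto w atTop (𝓝 0)) (s : ℤ) :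
    ‖w s‖ₑ ≤ ∑' t : ℤ, ‖w (t + 1) - w t‖ₑ := by
  have h1 : ∀ n : ℕ, ‖w s‖ₑ ≤ ‖w (s + n)‖ₑ + ∑' t : ℤ, ‖w (t + 1) - w t‖ₑ := by
    intro n
    have h2 : w s = w (s + n) - ∑ j ∈ Finset.range n, (w (s + j + 1) - w (s + j)) := by
      have := Finset.sum_range_sub (fun j : ℕ => w (s + j)) n
      push_cast at this
      simp only [← add_assoc] at this
      rw [this]; simp
    have h3 : ∑ j ∈ Finset.range n, ‖w (s + j + 1) - w (s + j)‖ₑ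
        ≤ ∑' t : ℤ, ‖w (t + 1) - w t‖ₑ := by
      have hinj : Function.Injective (fun j : ℕ => s + (j : ℤ)) := by
        intro a b h; simpa using h
      calc _ ≤ ∑' j : ℕ, ‖w (s + j + 1) - w (s + j)‖ₑ := ENNReal.sum_le_tsum _
        _ ≤ _ := ENNReal.tsum_comp_le_tsum_of_injective hinj (fun t => ‖w (t + 1) - w t‖ₑ)
    calc ‖w s‖ₑ = ‖w (s + n) - ∑ j ∈ Finset.range n, (w (s + j + 1) - w (s + j))‖ₑ := by rw [← h2]
      _ ≤ ‖w (s + n)‖ₑ + ‖∑ j ∈ Finset.range n, (w (s + j + 1) - w (s + j))‖ₑ := enorm_sub_le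
      _ ≤ _ := by
        gcongr
        exact (enorm_sum_le _ _).trans h3
  have h4 : Tendsto (fun n : ℕ => ‖w (s + n)‖ₑ + ∑' t : ℤ, ‖w (t + 1) - w t‖ₑ) atTop
      (𝓝 (0 + ∑' t : ℤ, ‖w (t + 1) - w t‖ₑ)) := by
    refine Tendsto.add ?_ tendsto_const_nhds
    have : Tendsto (fun n : ℕ => w (s + n)) atTop (𝓝 0) :=
      hw.comp (tendsto_atTop_add_const_left _ _ tendsto_natCast_atTop_atTop)
    simpa using this.enorm
  simpa using ge_of_tendsto' h4 h1

/-- Unit coordinate vector of the lattice. -/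
def ee {N : ℕ} (k : Fin N) : ZN N := Pi.single k 1

/-- The discrete Gagliardo–Nirenberg–Sobolev inequality for `p = 1`. Only vanishing at infinity is
needed, since both sides take values in `[0, ∞]`. -/
lemma sob_one {N : ℕ} (hN : 2 ≤ N) (w : ZN N → ℝ) (hw : Tendsto w cofinite (𝓝 0)) :
    ∑' x, ‖w x‖ₑ ^ ((N : ℝ) / ((N : ℝ) - 1))
      ≤ (∑' x, ∑ k, ‖w (x + ee k) - w x‖ₑ) ^ ((N : ℝ) / ((N : ℝ) - 1)) := by
  have h2 : (2 : ℝ) ≤ N := by exact_mod_cast hN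
  refine le_trans ?_ (gridlines hN (fun x => ∑ k, ‖w (x + ee k) - w x‖ₑ))
  refine ENNReal.tsum_le_tsum fun x => ?_
  have key : ∀ k : Fin N, ‖w x‖ₑ ≤
      ∑' t : ℤ, ∑ j, ‖w (Function.update x k t + ee j) - w (Function.update x k t)‖ₑ := by
    intro k
    have hinj : Function.Injective (fun t : ℤ => Function.update x k t) :=
      Function.update_injective x k
    have ht : Tendsto (fun t : ℤ => w (Function.update x k t)) atTop (𝓝 0) := by
      refine (hw.comp hinj.tendsto_cofinite).mono_left ?_
      exact atTop_le_cofinite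
    have := enorm_le_line _ ht (x k)
    rw [Function.update_eq_self] at this
    refine this.trans (ENNReal.tsum_le_tsum fun t => ?_)
    have hup : Function.update x k (t + 1) = Function.update x k t + ee k := by
      ext j
      by_cases h : j = k
      · subst h; simp [ee]
      · simp [ee, h]
    rw [hup]
    exact Finset.single_le_sum
      (f := fun j => ‖w (Function.update x k t + ee j) - w (Function.update x k t)‖ₑ)
      (fun _ _ => zero_le) (Finset.mem_univ k)
  calc ‖w x‖ₑ ^ ((N : ℝ) / ((N : ℝ) - 1))
      = ∏ _k : Fin N, ‖w x‖ₑ ^ ((1 : ℝ) / ((N : ℝ) - 1)) := by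
        rw [Finset.prod_const, Finset.card_univ, Fintype.card_fin, ← ENNReal.rpow_natCast,
          ← ENNReal.rpow_mul]
        congr 1; ring
    _ ≤ _ := by
        refine Finset.prod_le_prod' fun k _ => ENNReal.rpow_le_rpow (key k) ?_
        exact one_div_nonneg.mpr (by linarith)

/-! ### The gradient as a function on directed edges -/

/-- The neighbours of the origin, i.e. the unit lattice steps `± e_k`. -/
abbrev Nb (N : ℕ) := {e : ZN N // adj (0 : ZN N) e}

/-- The discrete gradient of `u` as a function on pairs (base point, unit step). -/
def dd {N : ℕ} (u : ZN N → ℝ) (z : ZN N × Nb N) : ℝ := u (z.1 + z.2.1) - u z.1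

lemma adj_iff {N : ℕ} (x y : ZN N) : adj x y ↔ adj 0 (y - x) := by
  unfold adj
  simp

/-- Translation identifies the neighbours of `x` with those of the origin. -/
def nbEquiv {N : ℕ} (x : ZN N) : Nb N ≃ {y : ZN N // adj x y} where
  toFun e := ⟨x + e.1, by rw [adj_iff]; simpa using e.2⟩
  invFun y := ⟨y.1 - x, (adj_iff x y.1).1 y.2⟩
  left_inv e := by simp
  right_inv y := by simp

instance {N : ℕ} : Finite (Nb N) := by
  refine Set.Finite.subset (Set.finite_Icc (-1 : ZN N) 1) ?_
  intro e he
  have he' : (∑ k, |(0 : ZN N) k - e k|) = 1 := he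
  have h : ∀ k, |e k| ≤ 1 := fun k => by
    rw [← he']
    have := Finset.single_le_sum (f := fun k => |(0 : ZN N) k - e k|)
      (fun j _ => abs_nonneg ((0 : ZN N) j - e j)) (Finset.mem_univ k)
    simpa only [Pi.zero_apply, zero_sub, abs_neg] using this
  exact ⟨fun k => (abs_le.1 (h k)).1, fun k => (abs_le.1 (h k)).2⟩

lemma gradPow_eq {N : ℕ} (p : ℝ) (u : ZN N → ℝ) (x : ZN N) :
    gradPow p u x = ∑' e : Nb N, |dd u (x, e)| ^ p :=
  ((nbEquiv x).tsum_eq (fun y : {y : ZN N // adj x y} => |u y.1 - u x| ^ p)).symm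

/-- The energy as a single sum over (base point, unit step) pairs, see also `DSumPow_eq`; this puts
the gradient in the scope of lemmas on `ℓ^p` of an arbitrary index set. -/
lemma summable_grad_iff {N : ℕ} (p : ℝ) (u : ZN N → ℝ) :
    (Summable fun x => gradPow p u x) ↔ Summable fun z => |dd u z| ^ p := by
  rw [summable_prod_of_nonneg (fun z => Real.rpow_nonneg (abs_nonneg _) _)]
  simp only [gradPow_eq]
  exact ⟨fun h => ⟨fun x => Summable.of_finite, h⟩, fun h => h.2⟩

lemma DSumPow_eq {N : ℕ} {p : ℝ} {u : ZN N → ℝ} (h : Summable fun z => |dd u z| ^ p) :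
    DSumPow p u = ∑' z, |dd u z| ^ p := by
  rw [h.tsum_prod]
  simp only [DSumPow, gradPow_eq]

/-! ### The Sobolev inequality for general p -/

lemma ofReal_tsum_rpow {ι : Type*} {r : ℝ} (hr : 0 ≤ r) {f : ι → ℝ}
    (hf : Summable fun i => |f i| ^ r) :
    ENNReal.ofReal (∑' i, |f i| ^ r) = ∑' i, ‖f i‖ₑ ^ r := by
  rw [ENNReal.ofReal_tsum_of_nonneg (fun i => Real.rpow_nonneg (abs_nonneg _) _) hf]
  refine tsum_congr fun i => ?_
  rw [← ENNReal.ofReal_rpow_of_nonneg (abs_nonneg _) hr, ← Real.enorm_eq_ofReal_abs]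

lemma holder_tsum {N : ℕ} (f g : ZN N → ENNReal) {a b : ℝ} (ha : 0 ≤ a) (hb : 0 ≤ b)
    (hab : a + b = 1) :
    ∑' x, f x ^ a * g x ^ b ≤ (∑' x, f x) ^ a * (∑' x, g x) ^ b := by
  have := ENNReal.lintegral_mul_norm_pow_le (μ := (MeasureTheory.Measure.count))
    (measurable_of_countable f).aemeasurable (measurable_of_countable g).aemeasurable ha hb hab
  simpa only [MeasureTheory.lintegral_count] using this

lemma ee_adj {N : ℕ} (k : Fin N) : adj (0 : ZN N) (ee k) := by
  unfold adj ee
  rw [Finset.sum_eq_single k]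
  · simp
  · intro j _ hj; simp [hj]
  · simp

lemma rpow_sub_le {γ a b : ℝ} (hγ : 1 ≤ γ) (ha : 0 ≤ a) (hb : 0 ≤ b) :
    |a ^ γ - b ^ γ| ≤ γ * (a ^ (γ - 1) + b ^ (γ - 1)) * |a - b| := by
  wlog h : b ≤ a generalizing a b
  · rw [abs_sub_comm, abs_sub_comm a b, add_comm]
    exact this hb ha (le_of_not_ge h)
  rcases ha.eq_or_lt with rfl | ha'
  · have : b = 0 := le_antisymm h hb
    subst this; simp
  rw [abs_of_nonneg (sub_nonneg.2 (Real.rpow_le_rpow hb h (by linarith))),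
    abs_of_nonneg (sub_nonneg.2 h)]
  have h1 : 1 + γ * (b / a - 1) ≤ (1 + (b / a - 1)) ^ γ :=
    one_add_mul_self_le_rpow_one_add (by have := div_nonneg hb ha; linarith) hγ
  have h2 : a ^ γ * (b / a) ^ γ = b ^ γ := by
    rw [← Real.mul_rpow ha (div_nonneg hb ha)]; congr 1; field_simp
  have h3 : a ^ γ = a ^ (γ - 1) * a := by
    rw [Real.rpow_sub_one ha'.ne']; field_simp
  have h4 : a ^ γ * (1 + γ * (b / a - 1)) ≤ b ^ γ := by
    rw [← h2]
    refine mul_le_mul_of_nonneg_left ?_ (by positivity)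
    simpa using h1
  have h5 : a ^ γ * (1 + γ * (b / a - 1)) = a ^ γ + γ * a ^ (γ - 1) * (b - a) := by
    rw [h3]; field_simp
  have h6 : 0 ≤ γ * b ^ (γ - 1) * (a - b) :=
    mul_nonneg (by positivity) (by linarith)
  nlinarith

lemma enorm_rpow_sub_le {γ : ℝ} (hγ : 1 ≤ γ) (a b : ℝ) :
    ‖|a| ^ γ - |b| ^ γ‖ₑ ≤
      ENNReal.ofReal γ * (‖a‖ₑ ^ (γ - 1) * ‖a - b‖ₑ + ‖b‖ₑ ^ (γ - 1) * ‖a - b‖ₑ) := by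
  have h := rpow_sub_le hγ (abs_nonneg a) (abs_nonneg b)
  have h0 : 0 ≤ γ - 1 := by linarith
  have h2 : |(|a| ^ γ - |b| ^ γ)| ≤
      γ * (|a| ^ (γ - 1) * |a - b| + |b| ^ (γ - 1) * |a - b|) := by
    calc _ ≤ _ := h
      _ ≤ γ * (|a| ^ (γ - 1) + |b| ^ (γ - 1)) * |a - b| := by
        exact mul_le_mul_of_nonneg_left (abs_abs_sub_abs_le a b) (by positivity)
      _ = _ := by ring
  rw [Real.enorm_eq_ofReal_abs]
  refine (ENNReal.ofReal_le_ofReal h2).trans_eq ?_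
  rw [ENNReal.ofReal_mul (by linarith), ENNReal.ofReal_add (by positivity) (by positivity),
    ENNReal.ofReal_mul (by positivity), ENNReal.ofReal_mul (by positivity),
    ← ENNReal.ofReal_rpow_of_nonneg (abs_nonneg _) h0,
    ← ENNReal.ofReal_rpow_of_nonneg (abs_nonneg _) h0]
  simp only [← Real.enorm_eq_ofReal_abs]

/-- The inequality `sob_one` for `|u| ^ γ` with `γ = p (N - 1) / (N - p)`, after Hölder. The exponent
`γ` is chosen so that `γ N / (N - 1) = p*` and `γ - 1 = p* (1 - 1 / p)`; the norm of `u` in `ℓ^{p*}`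
therefore appears on both sides. -/
lemma sobolev_ennreal {N : ℕ} (hN : 2 ≤ N) {p : ℝ} (hp1 : 1 ≤ p) (hpN : p < (N : ℝ))
    {u : ZN N → ℝ} (hu : Memlp ((N : ℝ) * p / ((N : ℝ) - p)) u) :
    ∑' x, ‖u x‖ₑ ^ ((N : ℝ) * p / ((N : ℝ) - p)) ≤
      (N * (ENNReal.ofReal (p * ((N : ℝ) - 1) / ((N : ℝ) - p)) *
        (2 * ((∑' x, ‖u x‖ₑ ^ ((N : ℝ) * p / ((N : ℝ) - p))) ^ (1 - 1 / p) *
          (∑' z, ‖dd u z‖ₑ ^ p) ^ (1 / p))))) ^ ((N : ℝ) / ((N : ℝ) - 1)) := by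
  have h2 : (2 : ℝ) ≤ N := by exact_mod_cast hN
  have hp0 : 0 < p := by linarith
  have hNp : 0 < (N : ℝ) - p := by linarith
  have hN1 : 0 < (N : ℝ) - 1 := by linarith
  set r := (N : ℝ) * p / ((N : ℝ) - p) with hr
  set γ := p * ((N : ℝ) - 1) / ((N : ℝ) - p) with hγ
  have hr0 : 0 < r := by positivity
  have hγ1 : 1 ≤ γ := by
    rw [hγ, le_div_iff₀ hNp]; nlinarith
  have hγr : γ * ((N : ℝ) / ((N : ℝ) - 1)) = r := by rw [hγ, hr]; field_simp
  have hγ1r : r * (1 - 1 / p) = γ - 1 := by rw [hγ, hr]; field_simp; ring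
  have hw : Tendsto (fun x => |u x| ^ γ) cofinite (𝓝 0) := by
    have h3 := hu.tendsto_cofinite_zero
    have h4 := h3.rpow_const (p := γ / r) (Or.inr (by positivity))
    rw [Real.zero_rpow (by positivity)] at h4
    refine h4.congr fun x => ?_
    rw [← Real.rpow_mul (abs_nonneg _)]
    congr 1; field_simp
  have h5 := sob_one hN _ hw
  have h6 : ∀ x, ‖|u x| ^ γ‖ₑ ^ ((N : ℝ) / ((N : ℝ) - 1)) = ‖u x‖ₑ ^ r := by
    intro x
    rw [Real.enorm_of_nonneg (by positivity),
      ← ENNReal.ofReal_rpow_of_nonneg (abs_nonneg _) (by linarith), ← Real.enorm_eq_ofReal_abs,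
      ← ENNReal.rpow_mul, hγr]
  simp only [h6] at h5
  refine h5.trans (ENNReal.rpow_le_rpow ?_ (by positivity))
  rw [Summable.tsum_finsetSum (fun _ _ => ENNReal.summable)]
  have hpa : 0 ≤ 1 - 1 / p := by
    rw [sub_nonneg, div_le_one hp0]; exact hp1
  have hpb : 0 ≤ 1 / p := by positivity
  have hstep : ∀ (k : Fin N) (f : ZN N → ENNReal), (∑' x, f x ^ r = ∑' x, ‖u x‖ₑ ^ r) →
      ∑' x, f x ^ (γ - 1) * ‖u (x + ee k) - u x‖ₑ ≤
        (∑' x, ‖u x‖ₑ ^ r) ^ (1 - 1 / p) * (∑' z, ‖dd u z‖ₑ ^ p) ^ (1 / p) := by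
    intro k f hf
    have h7 := holder_tsum (fun x => f x ^ r) (fun x => ‖u (x + ee k) - u x‖ₑ ^ p) hpa hpb
      (by ring)
    simp only [← ENNReal.rpow_mul, hγ1r, mul_one_div_cancel hp0.ne', ENNReal.rpow_one, hf] at h7
    refine h7.trans ?_
    gcongr
    exact ENNReal.tsum_comp_le_tsum_of_injective
      (f := fun x : ZN N => (x, (⟨ee k, ee_adj k⟩ : Nb N)))
      (fun a b h => by simpa using h) (fun z => ‖dd u z‖ₑ ^ p)
  calc _ ≤ ∑ _k : Fin N, (ENNReal.ofReal γ * (2 * ((∑' x, ‖u x‖ₑ ^ r) ^ (1 - 1 / p) *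
          (∑' z, ‖dd u z‖ₑ ^ p) ^ (1 / p)))) := by
        refine Finset.sum_le_sum fun k _ => ?_
        refine (ENNReal.tsum_le_tsum fun x => enorm_rpow_sub_le hγ1 _ _).trans ?_
        rw [ENNReal.tsum_mul_left, ENNReal.tsum_add, two_mul]
        gcongr
        · exact hstep k (fun x => ‖u (x + ee k)‖ₑ)
            ((Equiv.addRight (ee k)).tsum_eq (fun x => ‖u x‖ₑ ^ r))
        · exact hstep k (fun x => ‖u x‖ₑ) rfl
    _ = _ := by simp

/-- The discrete Sobolev inequality, with `N / (N - p) = p* / p`. Finiteness of `‖u‖_{p*}`, part of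
`MemD`, is what allows it to be absorbed from the right-hand side of `sobolev_ennreal`. -/
lemma sobolev {N : ℕ} (hN : 2 ≤ N) {p : ℝ} (hp1 : 1 ≤ p) (hpN : p < (N : ℝ)) :
    ∃ C : ℝ, 0 < C ∧ ∀ u : ZN N → ℝ, MemD p ((N : ℝ) * p / ((N : ℝ) - p)) u →
      ∑' x, |u x| ^ ((N : ℝ) * p / ((N : ℝ) - p)) ≤
        C * DSumPow p u ^ ((N : ℝ) / ((N : ℝ) - p)) := by
  have h2 : (2 : ℝ) ≤ N := by exact_mod_cast hN
  have hp0 : 0 < p := by linarith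
  have hNp : 0 < (N : ℝ) - p := by linarith
  have hN1 : 0 < (N : ℝ) - 1 := by linarith
  set r := (N : ℝ) * p / ((N : ℝ) - p) with hr
  set γ := p * ((N : ℝ) - 1) / ((N : ℝ) - p) with hγ
  have hr0 : 0 < r := by positivity
  have hγ0 : 0 < γ := by positivity
  -- Dividing by the power of `A = ‖u‖_r^r` on the right leaves `A ^ θ` on the left.
  set θ := ((N : ℝ) - p) / (p * ((N : ℝ) - 1)) with hθ
  set m := (N : ℝ) / ((N : ℝ) - 1) with hm
  have hθ0 : 0 < θ := by positivity
  have hm0 : 0 < m := by positivity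
  have hpa : 0 ≤ 1 - 1 / p := by
    rw [sub_nonneg, div_le_one hp0]; exact hp1
  set K := (N : ℝ) * (γ * 2) with hK
  have hK0 : 0 < K := by positivity
  refine ⟨(K ^ m) ^ (1 / θ), by positivity, fun u hu => ?_⟩
  have hs := (summable_grad_iff p u).1 hu.2
  rw [DSumPow_eq hs]
  have h := sobolev_ennreal hN hp1 hpN hu.1
  rw [← ofReal_tsum_rpow hr0.le hu.1, ← ofReal_tsum_rpow hp0.le hs] at h
  set A := ∑' x, |u x| ^ r with hA
  set D := ∑' z, |dd u z| ^ p with hD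
  have hA0 : 0 ≤ A := tsum_nonneg fun _ => by positivity
  have hD0 : 0 ≤ D := tsum_nonneg fun _ => by positivity
  rcases hA0.eq_or_lt with hA00 | hApos
  · rw [← hA00]; positivity
  have h3 : A ≤ (K * (A ^ (1 - 1 / p) * D ^ (1 / p))) ^ m := by
    rw [← ENNReal.ofReal_le_ofReal_iff (by positivity)]
    refine h.trans_eq ?_
    rw [ENNReal.ofReal_rpow_of_nonneg hA0 hpa, ENNReal.ofReal_rpow_of_nonneg hD0 (by positivity),
      ← ENNReal.ofReal_mul (by positivity), ← ENNReal.ofReal_ofNat 2,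
      ← ENNReal.ofReal_mul (by positivity), ← ENNReal.ofReal_mul (by positivity),
      ← ENNReal.ofReal_natCast, ← ENNReal.ofReal_mul (by positivity),
      ENNReal.ofReal_rpow_of_nonneg (by positivity) hm0.le]
    congr 2
    rw [hK]; ring
  have h4 : A ^ θ ≤ K ^ m * D ^ (m / p) := by
    have e1 : (K * (A ^ (1 - 1 / p) * D ^ (1 / p))) ^ m
        = K ^ m * D ^ (m / p) * A ^ ((1 - 1 / p) * m) := by
      rw [Real.mul_rpow hK0.le (by positivity),
        Real.mul_rpow (x := A ^ (1 - 1 / p)) (by positivity) (by positivity),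
        ← Real.rpow_mul hA0, ← Real.rpow_mul hD0]
      rw [show 1 / p * m = m / p by ring]; ring
    have e2 : A = A ^ θ * A ^ ((1 - 1 / p) * m) := by
      rw [← Real.rpow_add hApos]
      have : θ + (1 - 1 / p) * m = 1 := by rw [hθ, hm]; field_simp; ring
      rw [this, Real.rpow_one]
    rw [e1] at h3
    have h5 : A ^ θ * A ^ ((1 - 1 / p) * m) ≤ K ^ m * D ^ (m / p) * A ^ ((1 - 1 / p) * m) := by
      rw [← e2]; exact h3
    exact le_of_mul_le_mul_right h5 (Real.rpow_pos_of_pos hApos _)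
  have h6 := Real.rpow_le_rpow (by positivity) h4 (by positivity : 0 ≤ 1 / θ)
  rw [← Real.rpow_mul hA0, mul_one_div_cancel hθ0.ne', Real.rpow_one,
    Real.mul_rpow (by positivity) (by positivity), ← Real.rpow_mul hD0] at h6
  have e3 : m / p * (1 / θ) = (N : ℝ) / ((N : ℝ) - p) := by
    rw [hm, hθ]; field_simp
  rwa [e3] at h6

/-! ### The Brezis–Lieb lemma -/

lemma brezis_lieb_pointwise {p ε : ℝ} (hp : 1 ≤ p) (hε : 0 < ε) :
    ∃ C : ℝ, 0 ≤ C ∧ ∀ a b : ℝ,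
      |(|a + b| ^ p - |a| ^ p - |b| ^ p)| ≤ ε * |a| ^ p + C * |b| ^ p := by
  have hp0 : 0 ≤ p := by linarith
  have hp1 : 0 ≤ p - 1 := by linarith
  set L := p * ((2 : ℝ) ^ (p - 1) + 1) + 1 with hL
  have hL0 : 0 < L := by positivity
  set η := min 1 (ε / L) with hη
  have hη0 : 0 < η := by positivity
  have hη1 : η ≤ 1 := min_le_left _ _
  have hηL : η * L ≤ ε := by
    rw [← le_div_iff₀ hL0]; exact min_le_right _ _
  have hsplit : ∀ t : ℝ, 0 ≤ t → t ^ p = t ^ (p - 1) * t := by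
    intro t ht
    have := Real.rpow_add_one' (y := p - 1) ht (by linarith)
    simpa using this
  refine ⟨(1 / η + 1) ^ p + (1 / η) ^ p + 1, by positivity, fun a b => ?_⟩
  have hab := abs_add_le a b
  rcases le_or_gt |b| (η * |a|) with h | h
  · have hba : |b| ≤ |a| := h.trans (mul_le_of_le_one_left (abs_nonneg _) hη1)
    have h1 : |(|a + b| ^ p - |a| ^ p)| ≤
        p * ((2 : ℝ) ^ (p - 1) * |a| ^ (p - 1) + |a| ^ (p - 1)) * (η * |a|) := by
      refine (rpow_sub_le hp (abs_nonneg _) (abs_nonneg _)).trans ?_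
      rw [← Real.mul_rpow (by norm_num) (abs_nonneg _)]
      gcongr
      · linarith
      · refine (abs_abs_sub_abs_le _ _).trans ?_
        simpa using h
    have h2 : |b| ^ p ≤ |a| ^ (p - 1) * (η * |a|) := by
      rw [hsplit _ (abs_nonneg b)]
      gcongr
    have h3 : |(|a + b| ^ p - |a| ^ p - |b| ^ p)| ≤ η * L * |a| ^ p := by
      calc _ ≤ |(|a + b| ^ p - |a| ^ p)| + |(|b| ^ p)| := abs_sub _ _
        _ ≤ p * ((2 : ℝ) ^ (p - 1) * |a| ^ (p - 1) + |a| ^ (p - 1)) * (η * |a|)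
              + |a| ^ (p - 1) * (η * |a|) := by
            rw [abs_of_nonneg (by positivity : 0 ≤ |b| ^ p)]
            exact add_le_add h1 h2
        _ = _ := by rw [hsplit _ (abs_nonneg a), hL]; ring
    refine h3.trans ?_
    have h4 : η * L * |a| ^ p ≤ ε * |a| ^ p := by gcongr
    have h5 : 0 ≤ ((1 / η + 1) ^ p + (1 / η) ^ p + 1) * |b| ^ p := by positivity
    linarith
  · have h1 : |a| ≤ 1 / η * |b| := by
      rw [one_div, ← div_eq_inv_mul, le_div_iff₀ hη0]; linarith
    have h2 : |a + b| ≤ (1 / η + 1) * |b| := by linarith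
    have h3 : |a| ^ p ≤ (1 / η) ^ p * |b| ^ p := by
      rw [← Real.mul_rpow (by positivity) (abs_nonneg _)]; gcongr
    have h4 : |a + b| ^ p ≤ (1 / η + 1) ^ p * |b| ^ p := by
      rw [← Real.mul_rpow (by positivity) (abs_nonneg _)]; gcongr
    have h5 : 0 ≤ |a| ^ p := by positivity
    have h6 : 0 ≤ |b| ^ p := by positivity
    have h7 : 0 ≤ |a + b| ^ p := by positivity
    have h8 : 0 ≤ ε * |a| ^ p := by positivity
    rw [abs_le]
    constructor <;> nlinarith

/-- Fatou's lemma in `ℓ^r`. -/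
lemma summable_of_tendsto {ι : Type*} {r : ℝ} (hr : 0 ≤ r) {f : ℕ → ι → ℝ} {g : ι → ℝ} {M : ℝ}
    (hf : ∀ n, Summable fun i => |f n i| ^ r) (hM : ∀ n, ∑' i, |f n i| ^ r ≤ M)
    (hlim : ∀ i, Tendsto (fun n => f n i) atTop (𝓝 (g i))) :
    Summable fun i => |g i| ^ r := by
  refine summable_of_sum_le (c := M) (fun i => by positivity) fun s => ?_
  refine le_of_tendsto' (f := fun n => ∑ i ∈ s, |f n i| ^ r) (x := atTop)
    (tendsto_finsetSum _ fun i _ => ((hlim i).abs.rpow_const (Or.inr hr))) fun n => ?_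
  exact ((hf n).sum_le_tsum s fun i _ => by positivity).trans (hM n)

/-- The Brezis–Lieb lemma in `ℓ^p`. -/
lemma brezis_lieb {ι : Type*} {p : ℝ} (hp : 1 ≤ p) {f : ℕ → ι → ℝ} {g : ι → ℝ} {M : ℝ}
    (hf : ∀ n, Summable fun i => |f n i| ^ p) (hM : ∀ n, ∑' i, |f n i| ^ p ≤ M)
    (hlim : ∀ i, Tendsto (fun n => f n i) atTop (𝓝 (g i))) :
    (Summable fun i => |g i| ^ p) ∧ (∀ n, Summable fun i => |f n i - g i| ^ p) ∧
      Tendsto (fun n => ∑' i, |f n i| ^ p - ∑' i, |f n i - g i| ^ p) atTop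
        (𝓝 (∑' i, |g i| ^ p)) := by
  have hp0 : 0 ≤ p := by linarith
  have hg := summable_of_tendsto hp0 hf hM hlim
  obtain ⟨C₁, hC₁, hC₁'⟩ := brezis_lieb_pointwise hp one_pos
  have hdom : ∀ n i, |f n i - g i| ^ p ≤ 2 * |f n i| ^ p + (C₁ + 1) * |g i| ^ p := by
    intro n i
    have := (abs_le.1 (hC₁' (f n i) (-g i))).2
    rw [abs_neg, ← sub_eq_add_neg] at this
    linarith
  have hdoms : ∀ n, Summable fun i => 2 * |f n i| ^ p + (C₁ + 1) * |g i| ^ p := fun n =>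
    ((hf n).mul_left 2).add (hg.mul_left _)
  have ha : ∀ n, Summable fun i => |f n i - g i| ^ p := fun n =>
    Summable.of_nonneg_of_le (fun i => by positivity) (hdom n) (hdoms n)
  refine ⟨hg, ha, ?_⟩
  set G := ∑' i, |g i| ^ p with hG
  set M' := 2 * M + (C₁ + 1) * G with hM'
  have haM : ∀ n, ∑' i, |f n i - g i| ^ p ≤ M' := by
    intro n
    refine ((ha n).tsum_le_tsum (hdom n) (hdoms n)).trans ?_
    rw [((hf n).mul_left 2).tsum_add (hg.mul_left _), tsum_mul_left, tsum_mul_left, hM']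
    linarith [hM n]
  have hM'0 : 0 ≤ M' := (tsum_nonneg fun i => by positivity).trans (haM 0)
  rw [Metric.tendsto_atTop]
  intro ε hε
  set δ := ε / (2 * (M' + 1)) with hδ
  have hδ0 : 0 < δ := by positivity
  have hδM : δ * M' < ε / 2 := by
    have : δ * (M' + 1) = ε / 2 := by rw [hδ]; field_simp
    nlinarith
  obtain ⟨C, hC, hC'⟩ := brezis_lieb_pointwise hp hδ0
  set E : ℕ → ι → ℝ := fun n i => |f n i| ^ p - |f n i - g i| ^ p - |g i| ^ p with hE
  have hEb : ∀ n i, |E n i| ≤ δ * |f n i - g i| ^ p + C * |g i| ^ p := by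
    intro n i
    have := hC' (f n i - g i) (g i)
    rwa [sub_add_cancel] at this
  -- The part of the error not absorbed by `δ |f n - g| ^ p` is dominated by `C |g| ^ p`.
  set W : ℕ → ι → ℝ := fun n i => max (|E n i| - δ * |f n i - g i| ^ p) 0 with hW
  have hW0 : ∀ n i, 0 ≤ W n i := fun n i => le_max_right _ _
  have hWb : ∀ n i, W n i ≤ C * |g i| ^ p := fun n i =>
    max_le (by linarith [hEb n i]) (by positivity)
  have hWs : ∀ n, Summable (W n) := fun n =>
    Summable.of_nonneg_of_le (hW0 n) (hWb n) (hg.mul_left C)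
  have hWt : Tendsto (fun n => ∑' i, W n i) atTop (𝓝 0) := by
    have := tendsto_tsum_of_dominated_convergence (𝓕 := atTop) (f := W) (g := fun _ => (0 : ℝ))
      (hg.mul_left C) (fun i => ?_) (Eventually.of_forall fun n i => ?_)
    · simpa using this
    · have t1 : Tendsto (fun n => |f n i - g i| ^ p) atTop (𝓝 0) := by
        have := (((hlim i).sub_const (g i)).abs.rpow_const (p := p) (Or.inr hp0))
        simpa [Real.zero_rpow (by linarith : p ≠ 0)] using this
      have t2 : Tendsto (fun n => |f n i| ^ p) atTop (𝓝 (|g i| ^ p)) :=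
        (hlim i).abs.rpow_const (Or.inr hp0)
      have t3 := ((((t2.sub t1).sub_const (|g i| ^ p)).abs).sub (t1.const_mul δ)).max
        (tendsto_const_nhds (x := (0 : ℝ)))
      simpa [hW, hE] using t3
    · rw [Real.norm_of_nonneg (hW0 n i)]; exact hWb n i
  obtain ⟨n₀, hn₀⟩ := (Metric.tendsto_atTop.1 hWt) (ε / 2) (by positivity)
  refine ⟨n₀, fun n hn => ?_⟩
  have h1 := hn₀ n hn
  rw [Real.dist_eq, sub_zero, abs_of_nonneg (tsum_nonneg (hW0 n))] at h1
  have hbs : Summable fun i => W n i + δ * |f n i - g i| ^ p := (hWs n).add ((ha n).mul_left δ)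
  have hEle : ∀ i, ‖E n i‖ ≤ W n i + δ * |f n i - g i| ^ p := fun i => by
    rw [Real.norm_eq_abs]
    linarith [le_max_left (|E n i| - δ * |f n i - g i| ^ p) 0]
  have h2 : ‖∑' i, E n i‖ ≤ ∑' i, (W n i + δ * |f n i - g i| ^ p) :=
    tsum_of_norm_bounded hbs.hasSum hEle
  rw [(hWs n).tsum_add ((ha n).mul_left δ), tsum_mul_left] at h2
  have h3 : ∑' i, E n i = ∑' i, |f n i| ^ p - ∑' i, |f n i - g i| ^ p - G := by
    rw [((hf n).sub (ha n)).tsum_sub hg, (hf n).tsum_sub (ha n)]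
  rw [Real.dist_eq, ← h3, ← Real.norm_eq_abs]
  have h4 : δ * ∑' i, |f n i - g i| ^ p ≤ δ * M' := by gcongr; exact haM n
  linarith

/-! ### Translation, scaling and the variational inequality -/

lemma dd_translate {N : ℕ} (u : ZN N → ℝ) (i : ZN N) (z : ZN N × Nb N) :
    dd (fun x => u (x + i)) z = dd u (z.1 + i, z.2) := by
  simp only [dd]
  rw [add_right_comm]

lemma gradPow_translate {N : ℕ} (p : ℝ) (u : ZN N → ℝ) (i x : ZN N) :
    gradPow p (fun x => u (x + i)) x = gradPow p u (x + i) := by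
  simp only [gradPow_eq, dd_translate]

lemma DSumPow_translate {N : ℕ} (p : ℝ) (u : ZN N → ℝ) (i : ZN N) :
    DSumPow p (fun x => u (x + i)) = DSumPow p u := by
  unfold DSumPow
  simp only [gradPow_translate]
  exact (Equiv.addRight i).tsum_eq (gradPow p u)

lemma tsum_translate {N : ℕ} (r : ℝ) (u : ZN N → ℝ) (i : ZN N) :
    ∑' x, |u (x + i)| ^ r = ∑' x, |u x| ^ r :=
  (Equiv.addRight i).tsum_eq (fun x => |u x| ^ r)

lemma Memlp_translate {N : ℕ} {r : ℝ} {u : ZN N → ℝ} (h : Memlp r u) (i : ZN N) :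
    Memlp r (fun x => u (x + i)) :=
  (Equiv.addRight i).summable_iff.2 h

lemma MemD_translate {N : ℕ} {p r : ℝ} {u : ZN N → ℝ} (h : MemD p r u) (i : ZN N) :
    MemD p r (fun x => u (x + i)) := by
  refine ⟨Memlp_translate h.1 i, ?_⟩
  simp only [gradPow_translate]
  exact (Equiv.addRight i).summable_iff.2 h.2

lemma DSumPow_nonneg {N : ℕ} (p : ℝ) (u : ZN N → ℝ) : 0 ≤ DSumPow p u :=
  tsum_nonneg fun _ => tsum_nonneg fun _ => by positivity

lemma dd_smul {N : ℕ} (c : ℝ) (u : ZN N → ℝ) (z : ZN N × Nb N) :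
    dd (fun x => c * u x) z = c * dd u z := by
  simp only [dd]; ring

lemma MemD_smul {N : ℕ} {p r : ℝ} {u : ZN N → ℝ} (h : MemD p r u) (c : ℝ) :
    MemD p r (fun x => c * u x) := by
  constructor
  · unfold Memlp
    simp only [abs_mul, Real.mul_rpow (abs_nonneg c) (abs_nonneg _)]
    exact h.1.mul_left _
  · rw [summable_grad_iff]
    simp only [dd_smul, abs_mul, Real.mul_rpow (abs_nonneg c) (abs_nonneg _)]
    exact ((summable_grad_iff p u).1 h.2).mul_left _

lemma DSumPow_smul {N : ℕ} (p : ℝ) (u : ZN N → ℝ) (c : ℝ) :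
    DSumPow p (fun x => c * u x) = |c| ^ p * DSumPow p u := by
  unfold DSumPow
  simp only [gradPow_eq, dd_smul, abs_mul, Real.mul_rpow (abs_nonneg c) (abs_nonneg _),
    tsum_mul_left]

lemma lpNorm_eq_one {N : ℕ} {q : ℝ} (hq : 0 < q) {u : ZN N → ℝ} (h : lpNorm q u = 1) :
    (Summable fun x => |u x| ^ q) ∧ ∑' x, |u x| ^ q = 1 := by
  have h0 : 0 ≤ ∑' x, |u x| ^ q := tsum_nonneg fun _ => by positivity
  have h1 : ∑' x, |u x| ^ q = 1 := by
    have h2 : ((∑' x, |u x| ^ q) ^ (1 / q)) ^ q = 1 ^ q := congrArg (· ^ q) h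
    rwa [← Real.rpow_mul h0, one_div_mul_cancel hq.ne', Real.rpow_one, Real.one_rpow] at h2
  refine ⟨?_, h1⟩
  by_contra h3
  rw [tsum_eq_zero_of_not_summable h3] at h1
  exact zero_ne_one h1

/-- The variational inequality `S ‖w‖_q ^ p ≤ ‖w‖_D ^ p`, by homogeneity. -/
lemma homog_le {N : ℕ} {p q r S : ℝ} (hq : 0 < q) (hp : 0 < p)
    (hS : ∀ w : ZN N → ℝ, MemD p r w → lpNorm q w = 1 → S ≤ DSumPow p w)
    {w : ZN N → ℝ} (hw : MemD p r w) :
    S * (∑' x, |w x| ^ q) ^ (p / q) ≤ DSumPow p w := by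
  set A := ∑' x, |w x| ^ q with hA
  have hA0 : 0 ≤ A := tsum_nonneg fun _ => by positivity
  rcases hA0.eq_or_lt with h | h
  · rw [← h, Real.zero_rpow (by positivity), mul_zero]
    exact DSumPow_nonneg _ _
  have h1 := hS _ (MemD_smul hw (A ^ (-(1 / q)))) (by
    unfold lpNorm
    simp only [abs_mul, Real.mul_rpow (abs_nonneg (A ^ (-(1 / q)))) (abs_nonneg _),
      tsum_mul_left]
    rw [← hA, abs_of_nonneg (by positivity), ← Real.rpow_mul hA0, neg_mul,
      one_div_mul_cancel hq.ne', Real.rpow_neg_one, inv_mul_cancel₀ h.ne', Real.one_rpow])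
  rw [DSumPow_smul, abs_of_nonneg (by positivity), ← Real.rpow_mul hA0] at h1
  have h2 : A ^ (-(1 / q) * p) * A ^ (p / q) = 1 := by
    rw [← Real.rpow_add h, show -(1 / q) * p + p / q = 0 by ring, Real.rpow_zero]
  calc S * A ^ (p / q) ≤ A ^ (-(1 / q) * p) * DSumPow p w * A ^ (p / q) := by gcongr
    _ = (A ^ (-(1 / q) * p) * A ^ (p / q)) * DSumPow p w := by ring
    _ = _ := by rw [h2, one_mul]

/-- Strict subadditivity of `t ↦ t ^ s` for `s < 1` rules out splitting of the mass. -/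
lemma no_split {s a : ℝ} (hs : s < 1) (ha : 0 < a) (ha1 : a ≤ 1)
    (h : a ^ s + (1 - a) ^ s ≤ 1) : a = 1 := by
  by_contra hne
  have hlt : a < 1 := lt_of_le_of_ne ha1 hne
  have h1 := Real.rpow_lt_rpow_of_exponent_gt ha hlt hs
  have h2 := Real.rpow_lt_rpow_of_exponent_gt (sub_pos.2 hlt) (by linarith) hs
  rw [Real.rpow_one] at h1 h2
  linarith

/-- The infimum of the energy on the unit sphere of `ℓ^q` is positive. -/
lemma exists_lower_bound {N : ℕ} (hN : 2 ≤ N) {p q : ℝ} (hp1 : 1 ≤ p) (hpN : p < (N : ℝ))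
    (hq : (N : ℝ) * p / ((N : ℝ) - p) < q) :
    ∃ s : ℝ, 0 < s ∧ ∀ w : ZN N → ℝ, MemD p ((N : ℝ) * p / ((N : ℝ) - p)) w →
      lpNorm q w = 1 → s ≤ DSumPow p w := by
  obtain ⟨C, hC, hsob⟩ := sobolev hN hp1 hpN
  have h2 : (2 : ℝ) ≤ N := by exact_mod_cast hN
  have hNp : 0 < (N : ℝ) - p := by linarith
  set κ := (N : ℝ) / ((N : ℝ) - p) with hκ
  have hκ0 : 0 < κ := by positivity
  set r := (N : ℝ) * p / ((N : ℝ) - p) with hr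
  have hr0 : 0 < r := by positivity
  have hq0 : 0 < q := hr0.trans hq
  refine ⟨(1 / C) ^ (1 / κ), by positivity, fun w hw hw1 => ?_⟩
  obtain ⟨hs, hs1⟩ := lpNorm_eq_one hq0 hw1
  have hle : ∀ x, |w x| ≤ 1 := by
    intro x
    have h3 : |w x| ^ q ≤ 1 := hs1 ▸ hs.le_tsum x fun _ _ => by positivity
    by_contra! h4
    exact absurd h3 (not_le.2 (Real.one_lt_rpow h4 hq0))
  have h5 : 1 ≤ ∑' x, |w x| ^ r := by
    rw [← hs1]
    exact hs.tsum_le_tsum (fun x => Real.rpow_le_rpow_of_exponent_ge' (abs_nonneg _) (hle x)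
      hr0.le hq.le) hw.1
  have h6 := h5.trans (hsob w hw)
  have h7 : 1 / C ≤ DSumPow p w ^ κ := by
    rw [div_le_iff₀ hC]; linarith
  have h8 := Real.rpow_le_rpow (by positivity) h7 (by positivity : 0 ≤ 1 / κ)
  rwa [← Real.rpow_mul (DSumPow_nonneg _ _), mul_one_div_cancel hκ0.ne', Real.rpow_one] at h8

/-- A function of unit `ℓ^q` norm with bounded `ℓ^r` norm, `r < q`, cannot be uniformly small:
`‖w‖_q ^ q ≤ ‖w‖_∞ ^ (q - r) ‖w‖_r ^ r`. -/
lemma exists_nonvanishing {ι : Type*} {q r K : ℝ} (hr : 0 < r) (hrq : r < q) (hK : 0 ≤ K) :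
    ∃ δ : ℝ, 0 < δ ∧ ∀ w : ι → ℝ, (Summable fun x => |w x| ^ q) → (Summable fun x => |w x| ^ r) →
      ∑' x, |w x| ^ q = 1 → ∑' x, |w x| ^ r ≤ K → ∃ x, δ ≤ |w x| := by
  have hqr : 0 < q - r := sub_pos.2 hrq
  refine ⟨(1 / (K + 1)) ^ (1 / (q - r)), by positivity, fun w hwq hwr h1 hle => ?_⟩
  by_contra! hcon
  set δ := (1 / (K + 1)) ^ (1 / (q - r)) with hδ
  have hδ0 : 0 < δ := by positivity
  have hδ1 : δ ^ (q - r) = 1 / (K + 1) := by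
    rw [hδ, ← Real.rpow_mul (by positivity), one_div_mul_cancel hqr.ne', Real.rpow_one]
  have h2 : ∀ x, |w x| ^ q ≤ 1 / (K + 1) * |w x| ^ r := by
    intro x
    have h3 : |w x| ^ q = |w x| ^ (q - r) * |w x| ^ r := by
      rw [← Real.rpow_add' (abs_nonneg _) (by linarith), sub_add_cancel]
    rw [h3, ← hδ1]
    gcongr
    exact (hcon x).le
  have h4 := hwq.tsum_le_tsum h2 (hwr.mul_left _)
  rw [tsum_mul_left, h1] at h4
  have h5 : 1 / (K + 1) * ∑' x, |w x| ^ r ≤ 1 / (K + 1) * K := by gcongr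
  have h6 : 1 / (K + 1) * K < 1 := by
    rw [one_div, ← div_eq_inv_mul, div_lt_one (by positivity)]; linarith
  linarith

/-! ### Minimizing sequences -/

/-- existence of extremal functions for the supercritical discrete
Sobolev inequality on `ℤ^N`. -/
theorem stmt0 (N : ℕ) (hN : 3 ≤ N) (p q : ℝ) (hp1 : 1 ≤ p) (hpN : p < (N : ℝ))
    (hq : (N : ℝ) * p / ((N : ℝ) - p) < q)
    (S : ℝ)
    (hS : S = sInf {t : ℝ | ∃ u : ZN N → ℝ,
        MemD p ((N : ℝ) * p / ((N : ℝ) - p)) u ∧ lpNorm q u = 1 ∧ t = DSumPow p u})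
    (u : ℕ → ZN N → ℝ)
    (hmem : ∀ n, MemD p ((N : ℝ) * p / ((N : ℝ) - p)) (u n))
    (hnorm : ∀ n, lpNorm q (u n) = 1)
    (hmin : Tendsto (fun n => DSumPow p (u n)) atTop (𝓝 S)) :
    ∃ (i : ℕ → ZN N) (φ : ℕ → ℕ), StrictMono φ ∧
      ∃ v : ZN N → ℝ, MemD p ((N : ℝ) * p / ((N : ℝ) - p)) v ∧
        lpNorm q v = 1 ∧ DSumPow p v = S ∧
        Tendsto (fun k => Dnorm p (fun x => u (φ k) (x + i (φ k)) - v x)) atTop (𝓝 0) := by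
  have hN2 : 2 ≤ N := by omega
  have h2 : (2 : ℝ) ≤ N := by exact_mod_cast hN2
  have hp0 : 0 < p := by linarith
  have hNp : 0 < (N : ℝ) - p := by linarith
  obtain ⟨C, hC, hsob⟩ := sobolev hN2 hp1 hpN
  obtain ⟨s, hs0, hs⟩ := exists_lower_bound hN2 hp1 hpN hq
  set κ := (N : ℝ) / ((N : ℝ) - p) with hκ
  have hκ0 : 0 < κ := by positivity
  set r := (N : ℝ) * p / ((N : ℝ) - p) with hr
  have hr0 : 0 < r := by positivity
  have hpr : p ≤ r := by
    rw [hr, le_div_iff₀ hNp]; nlinarith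
  have hq0 : 0 < q := hr0.trans hq
  have hq1 : 1 ≤ q := by linarith
  have hpq : p / q < 1 := by rw [div_lt_one hq0]; linarith
  set T := {t : ℝ | ∃ u : ZN N → ℝ, MemD p r u ∧ lpNorm q u = 1 ∧ t = DSumPow p u} with hT
  have hTne : T.Nonempty := ⟨_, u 0, hmem 0, hnorm 0, rfl⟩
  have hSpos : 0 < S := by
    refine hs0.trans_le ?_
    rw [hS]
    refine le_csInf hTne ?_
    rintro _ ⟨w, hw, hw1, rfl⟩
    exact hs w hw hw1
  have hSle : ∀ w : ZN N → ℝ, MemD p r w → lpNorm q w = 1 → S ≤ DSumPow p w := by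
    intro w hw hw1
    rw [hS]
    refine csInf_le ⟨0, ?_⟩ ⟨w, hw, hw1, rfl⟩
    rintro _ ⟨w', -, -, rfl⟩
    exact DSumPow_nonneg _ _
  obtain ⟨B, hB⟩ := hmin.bddAbove_range
  have hB' : ∀ n, DSumPow p (u n) ≤ B := fun n => hB ⟨n, rfl⟩
  have hB0 : 0 ≤ B := (DSumPow_nonneg _ _).trans (hB' 0)
  set K := C * B ^ κ with hK
  have hK0 : 0 ≤ K := by positivity
  have hAK : ∀ n, ∑' x, |u n x| ^ r ≤ K := fun n =>
    (hsob _ (hmem n)).trans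
      (mul_le_mul_of_nonneg_left (Real.rpow_le_rpow (DSumPow_nonneg _ _) (hB' n) hκ0.le) hC.le)
  obtain ⟨δ, hδ0, hδ⟩ := exists_nonvanishing (ι := ZN N) hr0 hq hK0
  have hq' := fun n => lpNorm_eq_one hq0 (hnorm n)
  -- Translate a point where `|u n|` is at least `δ` to the origin, so that no pointwise limit vanishes.
  choose i hi using fun n => hδ (u n) (hq' n).1 (hmem n).1 (hq' n).2 (hAK n)
  set V : ℕ → ZN N → ℝ := fun n x => u n (x + i n) with hV
  have hVD : ∀ n, DSumPow p (V n) = DSumPow p (u n) := fun n => DSumPow_translate p (u n) (i n)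
  have hVmem : ∀ n, MemD p r (V n) := fun n => MemD_translate (hmem n) (i n)
  have hVq : ∀ n, ∑' x, |V n x| ^ q = 1 := fun n =>
    (tsum_translate q (u n) (i n)).trans (hq' n).2
  have hVqs : ∀ n, Summable fun x => |V n x| ^ q := fun n => Memlp_translate (hq' n).1 (i n)
  have hVr : ∀ n, ∑' x, |V n x| ^ r ≤ K := fun n =>
    (tsum_translate r (u n) (i n)).trans_le (hAK n)
  have hV0 : ∀ n, δ ≤ |V n 0| := fun n => by simpa [hV] using hi n
  have hV1 : ∀ n, V n ∈ Set.univ.pi fun _ : ZN N => Set.Icc (-1 : ℝ) 1 := by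
    intro n x _
    refine abs_le.1 ?_
    have h3 : |V n x| ^ q ≤ 1 := hVq n ▸ (hVqs n).le_tsum x fun _ _ => by positivity
    by_contra! h4
    exact absurd h3 (not_le.2 (Real.one_lt_rpow h4 hq0))
  -- Tychonoff: pointwise convergence along a subsequence.
  obtain ⟨v, -, φ, hφ, hlim⟩ :=
    (isCompact_univ_pi fun _ : ZN N => isCompact_Icc).tendsto_subseq hV1
  have hlim' : ∀ x, Tendsto (fun n => V (φ n) x) atTop (𝓝 (v x)) := tendsto_pi_nhds.1 hlim
  have hlimd : ∀ z, Tendsto (fun n => dd (V (φ n)) z) atTop (𝓝 (dd v z)) := fun z =>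
    (hlim' _).sub (hlim' _)
  have hVds : ∀ n, Summable fun z => |dd (V n) z| ^ p := fun n =>
    (summable_grad_iff p _).1 (hVmem n).2
  have hVdB : ∀ n, ∑' z, |dd (V n) z| ^ p ≤ B := fun n => by
    rw [← DSumPow_eq (hVds n), hVD]; exact hB' n
  obtain ⟨bq1, bq2, bq3⟩ := brezis_lieb hq1 (fun n => hVqs (φ n)) (fun n => (hVq (φ n)).le) hlim'
  obtain ⟨bp1, bp2, bp3⟩ := brezis_lieb hp1 (fun n => hVds (φ n)) (fun n => hVdB (φ n)) hlimd
  obtain ⟨br1, br2, -⟩ := brezis_lieb (hp1.trans hpr) (fun n => (hVmem (φ n)).1)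
    (fun n => hVr (φ n)) hlim'
  have hvmem : MemD p r v := ⟨br1, (summable_grad_iff p v).2 bp1⟩
  set R : ℕ → ZN N → ℝ := fun n x => V (φ n) x - v x with hR
  have hRd : ∀ n z, dd (R n) z = dd (V (φ n)) z - dd v z := by
    intro n z; simp only [dd, hR]; ring
  have hRds : ∀ n, Summable fun z => |dd (R n) z| ^ p := fun n => by
    simp only [hRd]; exact bp2 n
  have hRmem : ∀ n, MemD p r (R n) := fun n => ⟨br2 n, (summable_grad_iff p _).2 (hRds n)⟩
  have hRD : Tendsto (fun n => DSumPow p (R n)) atTop (𝓝 (S - DSumPow p v)) := by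
    have h3 := (hmin.comp hφ.tendsto_atTop).sub bp3
    rw [← DSumPow_eq bp1] at h3
    refine h3.congr fun n => ?_
    simp only [Function.comp_apply]
    rw [DSumPow_eq (hRds n), ← hVD, DSumPow_eq (hVds (φ n))]
    simp only [hRd]
    ring
  set a := ∑' x, |v x| ^ q with ha
  have hRq : Tendsto (fun n => ∑' x, |R n x| ^ q) atTop (𝓝 (1 - a)) := by
    have h3 := bq3.const_sub 1
    refine h3.congr fun n => ?_
    rw [hVq]; ring
  have ha1 : a ≤ 1 := by
    have : 0 ≤ 1 - a := ge_of_tendsto' hRq fun n => tsum_nonneg fun _ => by positivity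
    linarith
  have hv0 : 0 < |v 0| := hδ0.trans_le (ge_of_tendsto' (hlim' 0).abs fun n => hV0 (φ n))
  have ha0 : 0 < a := (Real.rpow_pos_of_pos hv0 q).trans_le
    (bq1.le_tsum 0 fun _ _ => by positivity)
  have hv1 : S * a ^ (p / q) ≤ DSumPow p v := homog_le hq0 hp0 hSle hvmem
  have hR1 : S * (1 - a) ^ (p / q) ≤ S - DSumPow p v :=
    le_of_tendsto_of_tendsto' ((hRq.rpow_const (Or.inr (by positivity))).const_mul S) hRD
      fun n => homog_le hq0 hp0 hSle (hRmem n)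
  -- `S a^{p/q} + S (1-a)^{p/q} ≤ ‖v‖_D^p + lim ‖R n‖_D^p = S`, so all the mass is in the limit `v`.
  have haeq : a = 1 := by
    refine no_split hpq ha0 ha1 ?_
    have h3 : S * (a ^ (p / q) + (1 - a) ^ (p / q)) ≤ S * 1 := by linarith
    exact le_of_mul_le_mul_left h3 hSpos
  rw [haeq, Real.one_rpow, mul_one] at hv1
  rw [haeq, sub_self, Real.zero_rpow (by positivity), mul_zero] at hR1
  have hvS : DSumPow p v = S := by linarith
  refine ⟨i, φ, hφ, v, hvmem, ?_, hvS, ?_⟩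
  · unfold lpNorm
    rw [← ha, haeq, Real.one_rpow]
  · rw [hvS, sub_self] at hRD
    have h3 := hRD.rpow_const (p := 1 / p) (Or.inr (by positivity))
    rwa [Real.zero_rpow (by positivity)] at h3
end
end

section
/- Let N ≥ 3, 1 ≤ p < N, p* := Np/(N−p), and q ≥ p*. Then there is a constant C = C_{p,q} > 0 (depending only on N, p, q) such that ‖u‖_q ≤ C ‖u‖_{D^{1,p}} for every finitely supported function u : ℤ^N → ℝ (hence for every u ∈ D^{1,p}(ℤ^N)). -/
/-!
The inequality is first proved at the critical exponent `s = Np/(N-p)`, by the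
Gagliardo–Nirenberg argument, and then carried over to `q ≥ s`. All estimates take place in `ℝ≥0∞`,
where sums over `ℤ^N` need no summability side conditions.

* `p = 1`. Telescoping along a coordinate line gives `|w x| ≤ ∑ |∂_i w|`, the sum being over the
  line through `x` in direction `i` (`sob_line`). The product of these `N` bounds, each to the power
  `1/(N-1)`, is summed over `x` with Mathlib's grid-lines lemma
  `MeasureTheory.lintegral_prod_lintegral_pow_le`, applied to counting measure on `ℤ`. The outcome
  is `‖w‖_{N/(N-1)} ≤ ∑_x ∑_i |∂_i w x|` (`sob_one`).
* `1 ≤ p < N`. The case `p = 1` is applied to `w = |u|^γ` with `γ = p(N-1)/(N-p)`. In place of the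
  chain rule stands `||a|^γ - |b|^γ| ≤ γ (|a|^(γ-1) + |b|^(γ-1)) |a - b|` (`sob_rpow_sub`); Hölder's
  inequality and translation invariance then bound the right-hand side by a multiple of
  `‖u‖_s^{s(1-1/p)} ‖∇u‖_p`, and the power of `‖u‖_s` is absorbed on the left (`sob_critical`).
* `q ≥ s`. On a discrete space `‖u‖_q ≤ ‖u‖_s` (`sob_lp_mono`).

Since each vertex has finitely many neighbours, a finitely supported `u` has a finitely supported
`gradPow p u`; the real-valued sums in `Dnorm` are therefore genuine and agree with the `ℝ≥0∞` ones.
-/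


open Filter Topology

noncomputable section

section SobolevAux

open MeasureTheory Function
open scoped ENNReal

/-! ### The endpoint `p = 1` -/

/-- Discrete fundamental theorem of calculus: telescope from `s` to a point beyond the support. -/
theorem sob_line (g : ℤ → ℝ) (hg : (support g).Finite) (s : ℤ) :
    ‖g s‖ₑ ≤ ∑' t : ℤ, ‖g (t + 1) - g t‖ₑ := by
  obtain ⟨m, hm⟩ : ∃ m : ℕ, g (s + m) = 0 := by
    by_contra! h
    have : Set.Infinite (Set.range fun m : ℕ => s + (m : ℤ)) :=
      Set.infinite_range_of_injective fun a b hab => by simpa using hab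
    exact this (hg.subset (by rintro _ ⟨m, rfl⟩; exact h m))
  have key : ∀ m : ℕ, ‖g s‖ₑ ≤ ‖g (s + m)‖ₑ +
      ∑ k ∈ Finset.range m, ‖g (s + k + 1) - g (s + k)‖ₑ := by
    intro m
    induction m with
    | zero => simp
    | succ m ih =>
      rw [Finset.sum_range_succ]
      have h : ‖g (s + m)‖ₑ ≤ ‖g (s + m + 1)‖ₑ + ‖g (s + m + 1) - g (s + m)‖ₑ := by
        have := enorm_sub_le (a := g (s + m + 1)) (b := g (s + m + 1) - g (s + m))
        simpa using this
      push_cast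
      rw [← add_assoc s]
      calc _ ≤ _ := ih
        _ ≤ (‖g (s + m + 1)‖ₑ + ‖g (s + m + 1) - g (s + m)‖ₑ) + _ := by gcongr
        _ = _ := by ring
  have := key m
  rw [hm, enorm_zero, zero_add] at this
  refine this.trans ?_
  have h2 := ENNReal.tsum_comp_le_tsum_of_injective
    (f := fun k : ℕ => s + (k : ℤ)) (fun a b hab => by simpa using hab)
    (fun t : ℤ => ‖g (t + 1) - g t‖ₑ)
  exact (ENNReal.sum_le_tsum _).trans h2

theorem sob_lintegral_pi_count {N : ℕ} (f : ZN N → ℝ≥0∞) :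
    ∫⁻ x, f x ∂(Measure.pi fun _ : Fin N => (Measure.count : Measure ℤ)) = ∑' x, f x := by
  rw [lintegral_countable']
  simp [Measure.pi_singleton]

/-- The endpoint `p = 1`: the `ℓ^{N/(N-1)}` norm is bounded by the total variation. -/
theorem sob_one_s1 {N : ℕ} {r : ℝ} (hr : Real.HolderConjugate N r) (w : ZN N → ℝ)
    (hw : (support w).Finite) :
    ∑' x, ‖w x‖ₑ ^ r ≤ (∑' x, ∑ i, ‖w (x + Pi.single i 1) - w x‖ₑ) ^ r := by
  have hN : (0 : ℝ) < (N : ℝ) - 1 := by linarith [hr.lt]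
  have grid := lintegral_prod_lintegral_pow_le (ι := Fin N) (A := fun _ => ℤ)
    (fun _ => (Measure.count : Measure ℤ)) (p := r) (by simpa using hr)
    (f := fun x => ∑ i, ‖w (x + Pi.single i 1) - w x‖ₑ) (measurable_of_countable _)
  rw [sob_lintegral_pi_count, sob_lintegral_pi_count] at grid
  refine le_trans ?_ grid
  refine ENNReal.tsum_le_tsum fun x => ?_
  calc ‖w x‖ₑ ^ r = ∏ _i : Fin N, ‖w x‖ₑ ^ ((1 : ℝ) / (N - 1)) := by
        rw [Finset.prod_const, ← ENNReal.rpow_natCast, ← ENNReal.rpow_mul, hr.conjugate_eq]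
        simp only [Finset.card_univ, Fintype.card_fin]
        congr 1
        field_simp
    _ ≤ _ := by
        simp only [Fintype.card_fin]
        gcongr with i
        rw [lintegral_count]
        have hfin : (support fun t : ℤ => w (update x i t)).Finite :=
          hw.preimage (f := fun t : ℤ => update x i t) (update_injective x i).injOn
        have := sob_line (fun t => w (update x i t)) hfin (x i)
        simp only [update_eq_self] at this
        refine this.trans (ENNReal.tsum_le_tsum fun t => ?_)
        have hup : update x i (t + 1) = update x i t + Pi.single i 1 := by
          ext j
          by_cases h : j = i
          · subst h; simp
          · simp [h]
        rw [hup]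
        exact Finset.single_le_sum
          (f := fun j => ‖w (update x i t + Pi.single j 1) - w (update x i t)‖ₑ)
          (fun _ _ => zero_le) (Finset.mem_univ i)

/-! ### Powers of functions and Hölder's inequality -/

/-- Tangent-line bound for the convex function `t ↦ t ^ γ`, from Bernoulli's inequality at
`b / a`. -/
theorem sob_rpow_sub_aux {a b γ : ℝ} (hγ : 1 ≤ γ) (hb : 0 ≤ b) (hab : b ≤ a) :
    a ^ γ - b ^ γ ≤ γ * a ^ (γ - 1) * (a - b) := by
  rcases (hb.trans hab).eq_or_lt with h | ha
  · have hb0 : b = 0 := by linarith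
    rw [← h, hb0]; simp
  have hB := one_add_mul_self_le_rpow_one_add (s := b / a - 1) (by
    have : 0 ≤ b / a := by positivity
    linarith) hγ
  rw [add_sub_cancel, Real.div_rpow hb ha.le, le_div_iff₀ (by positivity)] at hB
  have hs : a ^ γ = a ^ (γ - 1) * a := by
    rw [← Real.rpow_add_one ha.ne']; simp
  have : (1 + γ * (b / a - 1)) * a ^ γ = a ^ γ - γ * a ^ (γ - 1) * (a - b) := by
    rw [hs]; field_simp; ring
  linarith

/-- Substitute for the chain rule for `|u| ^ γ`. -/
theorem sob_rpow_sub {γ : ℝ} (hγ : 1 ≤ γ) (a b : ℝ) :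
    ‖|a| ^ γ - |b| ^ γ‖ₑ ≤
      ENNReal.ofReal γ * (‖a‖ₑ ^ (γ - 1) + ‖b‖ₑ ^ (γ - 1)) * ‖a - b‖ₑ := by
  have hγ0 : 0 ≤ γ - 1 := by linarith
  have main : |(|a| ^ γ - |b| ^ γ)| ≤ γ * (|a| ^ (γ - 1) + |b| ^ (γ - 1)) * |a - b| := by
    have h1 : 0 ≤ |a| ^ (γ - 1) := by positivity
    have h2 : 0 ≤ |b| ^ (γ - 1) := by positivity
    rcases le_total |b| |a| with h | h
    · rw [abs_of_nonneg (sub_nonneg.2 (Real.rpow_le_rpow (abs_nonneg _) h (by linarith)))]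
      refine (sob_rpow_sub_aux hγ (abs_nonneg _) h).trans ?_
      gcongr
      · linarith
      · exact abs_sub_abs_le_abs_sub a b
    · rw [abs_of_nonpos (sub_nonpos.2 (Real.rpow_le_rpow (abs_nonneg _) h (by linarith))), neg_sub]
      refine (sob_rpow_sub_aux hγ (abs_nonneg _) h).trans ?_
      rw [abs_sub_comm a b]
      gcongr
      · linarith
      · exact abs_sub_abs_le_abs_sub b a
  simp only [Real.enorm_eq_ofReal_abs]
  rw [ENNReal.ofReal_rpow_of_nonneg (abs_nonneg _) hγ0,
    ENNReal.ofReal_rpow_of_nonneg (abs_nonneg _) hγ0,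
    ← ENNReal.ofReal_add (by positivity) (by positivity),
    ← ENNReal.ofReal_mul (by linarith), ← ENNReal.ofReal_mul (by positivity)]
  exact ENNReal.ofReal_le_ofReal main

/-- Hölder's inequality, with the dual exponent written so that `p = 1` is included: the first factor
then has exponent `0` on both sides. -/
theorem sob_holder {N : ℕ} {p : ℝ} (hp : 1 ≤ p) (s : ℝ) (f h : ZN N → ℝ≥0∞) :
    ∑' x, f x ^ (s * (1 - 1 / p)) * h x ≤
      (∑' x, f x ^ s) ^ (1 - 1 / p) * (∑' x, h x ^ p) ^ (1 / p) := by
  rcases hp.eq_or_lt with rfl | hp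
  · simp
  have hc := (Real.HolderConjugate.conjExponent hp).symm
  have hq : 1 - 1 / p = 1 / p.conjExponent := by
    have := hc.symm.one_sub_inv
    simpa using this
  have := ENNReal.lintegral_mul_le_Lp_mul_Lq (Measure.count : Measure (ZN N)) hc
    (f := fun x => f x ^ (s * (1 - 1 / p))) (g := h)
    (measurable_of_countable _).aemeasurable (measurable_of_countable _).aemeasurable
  simp only [lintegral_count, Pi.mul_apply, ← ENNReal.rpow_mul] at this
  rw [hq] at this ⊢
  have h1 : s * (1 / p.conjExponent) * p.conjExponent = s := by
    field_simp [hc.ne_zero]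
  rwa [h1] at this

/-! ### The critical exponent and beyond -/

/-- Sobolev inequality at the critical exponent, in `ℝ≥0∞`; `E` is any common bound for the
`p`-energies of `u` in the coordinate directions. -/
theorem sob_critical {N : ℕ} (hN : 3 ≤ N) {p : ℝ} (hp : 1 ≤ p) (hpN : p < N)
    (u : ZN N → ℝ) (hu : (support u).Finite) (E : ℝ≥0∞)
    (hE : ∀ i, ∑' x, ‖u (x + Pi.single i 1) - u x‖ₑ ^ p ≤ E) :
    (∑' x, ‖u x‖ₑ ^ (N * p / (N - p) : ℝ)) ^ (1 / (N * p / (N - p)) : ℝ) ≤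
      ENNReal.ofReal (N * (2 * (p * (N - 1) / (N - p)))) * E ^ (1 / p) := by
  have hN' : (3 : ℝ) ≤ N := by exact_mod_cast hN
  have hNp : (0 : ℝ) < N - p := by linarith
  have hp0 : 0 < p := by linarith
  have hN1 : (0 : ℝ) < N - 1 := by linarith
  set s : ℝ := N * p / (N - p) with hs
  set γ : ℝ := p * (N - 1) / (N - p) with hγdef
  have hs0 : 0 < s := by positivity
  have hγ : 1 ≤ γ := by
    rw [hγdef, one_le_div hNp]; nlinarith
  have hr : Real.HolderConjugate N (Real.conjExponent N) := .conjExponent (by linarith)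
  set r := Real.conjExponent N with hrdef
  have hr' : r = N / (N - 1) := rfl
  have hγr : γ * r = s := by rw [hγdef, hr', hs]; field_simp
  have hγ1 : γ - 1 = s * (1 - 1 / p) := by rw [hγdef, hs]; field_simp; ring
  have hexp : 1 / r - (1 - 1 / p) = 1 / s := by rw [hr', hs]; field_simp; ring
  set S := ∑' x, ‖u x‖ₑ ^ s with hS
  have hSeq : ∑' x, ‖|u x| ^ γ‖ₑ ^ r = S := by
    refine tsum_congr fun x => ?_
    rw [Real.enorm_rpow_of_nonneg (abs_nonneg _) (by linarith), show ‖|u x|‖ₑ = ‖u x‖ₑ by simp [Real.enorm_eq_ofReal_abs], ← ENNReal.rpow_mul, hγr]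
  have hStop : S ≠ ⊤ := by
    rw [hS, tsum_eq_sum (s := hu.toFinset)]
    · refine ENNReal.sum_ne_top.2 fun x _ => ENNReal.rpow_ne_top_of_nonneg hs0.le enorm_ne_top
    · intro x hx
      have : u x = 0 := by simpa using hx
      simp [this, hs0]
  -- `S ≠ 0` and `S ≠ ⊤` allow division by the power of `S` produced by Hölder's inequality.
  by_cases hS0 : S = 0
  · rw [hS0, ENNReal.zero_rpow_of_pos (by positivity)]; exact zero_le
  have h1 := sob_one_s1 hr (fun x => |u x| ^ γ) (hu.subset fun x hx => by
    intro h0; apply hx; simp [h0, (by linarith : γ ≠ 0)])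
  rw [hSeq] at h1
  have h2 : ∑' x, ∑ i, ‖|u (x + Pi.single i 1)| ^ γ - |u x| ^ γ‖ₑ ≤
      ENNReal.ofReal (N * (2 * γ)) * (S ^ (1 - 1 / p) * E ^ (1 / p)) := by
    rw [Summable.tsum_finsetSum fun _ _ => ENNReal.summable]
    have : ∀ i : Fin N, ∑' x, ‖|u (x + Pi.single i 1)| ^ γ - |u x| ^ γ‖ₑ ≤
        ENNReal.ofReal (2 * γ) * (S ^ (1 - 1 / p) * E ^ (1 / p)) := by
      intro i
      set D : ZN N → ℝ≥0∞ := fun x => ‖u (x + Pi.single i 1) - u x‖ₑ with hD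
      have hDE : (∑' x, D x ^ p) ^ (1 / p) ≤ E ^ (1 / p) := by gcongr; exact hE i
      have hshift : ∑' x : ZN N, ‖u (x + Pi.single i 1)‖ₑ ^ s = S :=
        (Equiv.addRight (Pi.single i 1 : ZN N)).tsum_eq fun x => ‖u x‖ₑ ^ s
      calc _ ≤ ∑' x, ENNReal.ofReal γ * (‖u (x + Pi.single i 1)‖ₑ ^ (s * (1 - 1 / p)) * D x +
                ‖u x‖ₑ ^ (s * (1 - 1 / p)) * D x) := by
            refine ENNReal.tsum_le_tsum fun x => (sob_rpow_sub hγ _ _).trans_eq ?_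
            rw [hγ1, hD]; ring
        _ ≤ ENNReal.ofReal γ * (S ^ (1 - 1 / p) * E ^ (1 / p) +
              S ^ (1 - 1 / p) * E ^ (1 / p)) := by
            rw [ENNReal.tsum_mul_left, ENNReal.tsum_add]
            gcongr
            · refine (sob_holder hp s (fun x => ‖u (x + Pi.single i 1)‖ₑ) D).trans ?_
              rw [hshift]; gcongr
            · refine (sob_holder hp s (fun x => ‖u x‖ₑ) D).trans ?_
              gcongr
        _ = _ := by
            rw [ENNReal.ofReal_mul (by norm_num)]; simp; ring
    refine (Finset.sum_le_sum fun i _ => this i).trans_eq ?_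
    rw [Finset.sum_const, ENNReal.ofReal_mul (p := (N : ℝ)) (by positivity)]
    simp [mul_assoc]
  have h3 : S ^ (1 / r) ≤ ENNReal.ofReal (N * (2 * γ)) * (S ^ (1 - 1 / p) * E ^ (1 / p)) := by
    rw [one_div, ENNReal.rpow_inv_le_iff hr.symm.pos]
    exact h1.trans (by have := hr.symm.pos; gcongr)
  rw [← hexp, ENNReal.rpow_sub _ _ hS0 hStop, ENNReal.div_le_iff
    (by simp [ENNReal.rpow_eq_zero_iff, hS0, hStop])
    (ENNReal.rpow_ne_top_of_ne_zero hS0 hStop)]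
  exact h3.trans_eq (by ring)

/-- Monotonicity of `ℓ^q` norms: every value is at most the `ℓ^s` norm, so `q - s` of the `q` factors
can be pulled out. -/
theorem sob_lp_mono {N : ℕ} {s q : ℝ} (hs : 0 < s) (hsq : s ≤ q) (f : ZN N → ℝ≥0∞) :
    (∑' x, f x ^ q) ^ (1 / q) ≤ (∑' x, f x ^ s) ^ (1 / s) := by
  have hq : 0 < q := by linarith
  set A := (∑' x, f x ^ s) ^ (1 / s) with hA
  have hAs : A ^ s = ∑' x, f x ^ s := by
    rw [hA, ← ENNReal.rpow_mul]; simp [hs.ne']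
  have hle : ∀ x, f x ≤ A := fun x => by
    rw [← ENNReal.rpow_le_rpow_iff hs, hAs]; exact ENNReal.le_tsum x
  rw [one_div, ENNReal.rpow_inv_le_iff hq]
  calc ∑' x, f x ^ q = ∑' x, f x ^ s * f x ^ (q - s) := by
        refine tsum_congr fun x => ?_
        rw [← ENNReal.rpow_add_of_nonneg _ _ hs.le (by linarith)]; simp
    _ ≤ ∑' x, f x ^ s * A ^ (q - s) := by
        refine ENNReal.tsum_le_tsum fun x => ?_
        gcongr
        · exact hle x
    _ = A ^ q := by
        rw [ENNReal.tsum_mul_right, ← hAs, ← ENNReal.rpow_add_of_nonneg _ _ hs.le (by linarith)]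
        simp

/-! ### Finite neighbourhoods and the energy `gradPow` -/

theorem adj_comm' {N : ℕ} {x y : ZN N} : adj x y ↔ adj y x := by
  unfold adj; simp only [abs_sub_comm]

theorem finite_adj {N : ℕ} (x : ZN N) : {y | adj x y}.Finite := by
  refine (Set.finite_Icc (x - 1) (x + 1)).subset fun y hy => ?_
  have h : ∀ k, |x k - y k| ≤ 1 := fun k => by
    have hy : ∑ k, |x k - y k| = 1 := hy
    rw [← hy]
    exact Finset.single_le_sum (f := fun k => |x k - y k|) (fun _ _ => abs_nonneg _)
      (Finset.mem_univ k)
  constructor <;> intro k <;> have := abs_le.1 (h k) <;> simp <;> omega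

theorem adj_add_single {N : ℕ} (x : ZN N) (i : Fin N) : adj x (x + Pi.single i 1) := by
  unfold adj
  rw [Finset.sum_eq_single i] <;> simp +contextual

theorem gradPow_nonneg {N : ℕ} (p : ℝ) (u : ZN N → ℝ) (x : ZN N) : 0 ≤ gradPow p u x :=
  tsum_nonneg fun _ => by positivity

theorem summable_gradPow {N : ℕ} {p : ℝ} (hp : 0 < p) (u : ZN N → ℝ) (hu : (support u).Finite) :
    Summable fun x => gradPow p u x := by
  refine summable_of_hasFiniteSupport
    ((hu.union (hu.biUnion fun y _ => finite_adj y)).subset fun x hx => ?_)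
  by_contra hcon
  simp only [Set.mem_union, Set.mem_iUnion, not_or, not_exists, mem_support, not_not,
    Set.mem_ofPred_eq] at hcon
  apply hx
  unfold gradPow
  have : ∀ y : {y : ZN N // adj x y}, |u y.1 - u x| ^ p = 0 := fun y => by
    have hy : u y.1 = 0 := by
      by_contra h
      exact hcon.2 y.1 h (adj_comm'.1 y.2)
    rw [hy, hcon.1]; simp [hp.ne']
  simp [this]

theorem diff_le_gradPow {N : ℕ} (p : ℝ) (u : ZN N → ℝ) (x : ZN N) (i : Fin N) :
    |u (x + Pi.single i 1) - u x| ^ p ≤ gradPow p u x := by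
  have : Finite {y : ZN N // adj x y} := (finite_adj x).to_subtype
  exact (Summable.of_finite (f := fun y : {y : ZN N // adj x y} => |u y.1 - u x| ^ p)).le_tsum
    ⟨_, adj_add_single x i⟩ fun _ _ => by positivity

end SobolevAux

/-- the discrete Sobolev inequality on `ℤ^N` for `q ≥ p* = Np/(N-p)`. -/
theorem stmt1 (N : ℕ) (hN : 3 ≤ N) (p q : ℝ) (hp1 : 1 ≤ p) (hpN : p < (N : ℝ))
    (hq : (N : ℝ) * p / ((N : ℝ) - p) ≤ q) :
    ∃ C : ℝ, 0 < C ∧ ∀ u : ZN N → ℝ, (Function.support u).Finite →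
      lpNorm q u ≤ C * Dnorm p u := by
  have hN' : (3 : ℝ) ≤ N := by exact_mod_cast hN
  have hNp : (0 : ℝ) < N - p := by linarith
  have hN1 : (0 : ℝ) < N - 1 := by linarith
  have hp0 : 0 < p := by linarith
  have hs0 : 0 < (N : ℝ) * p / (N - p) := by positivity
  have hq0 : 0 < q := by linarith
  refine ⟨N * (2 * (p * (N - 1) / (N - p))), by positivity, fun u hu => ?_⟩
  have hD0 : 0 ≤ DSumPow p u := tsum_nonneg fun x => gradPow_nonneg p u x
  have hE : ∀ i, ∑' x, ‖u (x + Pi.single i 1) - u x‖ₑ ^ p ≤ ENNReal.ofReal (DSumPow p u) := by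
    intro i
    unfold DSumPow
    rw [ENNReal.ofReal_tsum_of_nonneg (gradPow_nonneg p u) (summable_gradPow hp0 u hu)]
    refine ENNReal.tsum_le_tsum fun x => ?_
    rw [Real.enorm_eq_ofReal_abs, ENNReal.ofReal_rpow_of_nonneg (abs_nonneg _) hp0.le]
    exact ENNReal.ofReal_le_ofReal (diff_le_gradPow p u x i)
  have h := (sob_lp_mono hs0 hq fun x => ‖u x‖ₑ).trans (sob_critical hN hp1 hpN u hu _ hE)
  have hsum : Summable fun x => |u x| ^ q :=
    summable_of_hasFiniteSupport (hu.subset fun x hx h0 => hx (by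
      simp [show u x = 0 from h0, hq0.ne']))
  have hL : ENNReal.ofReal (lpNorm q u) = (∑' x, ‖u x‖ₑ ^ q) ^ (1 / q) := by
    unfold lpNorm
    rw [← ENNReal.ofReal_rpow_of_nonneg (tsum_nonneg fun _ => by positivity) (by positivity),
      ENNReal.ofReal_tsum_of_nonneg (fun _ => by positivity) hsum]
    congr 2
    ext x
    rw [Real.enorm_eq_ofReal_abs, ENNReal.ofReal_rpow_of_nonneg (abs_nonneg _) hq0.le]
  rw [← hL, ENNReal.ofReal_rpow_of_nonneg hD0 (by positivity),
    ← ENNReal.ofReal_mul (by positivity)] at h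
  exact (ENNReal.ofReal_le_ofReal_iff (by unfold Dnorm; positivity)).1 h
end
end

section
/- Let r, s, t > 1, 0 < λ < N, with 1/t + 1/s = 1 and 1/r + λ/N > 1 + 1/t. Set K := sup{‖|i|^{−λ} ∗ f‖_t : f ∈ ℓ^r(ℤ^N), ‖f‖_r = 1}. Let {f_n} ⊂ ℓ^r(ℤ^N) be a maximizing sequence, i.e. ‖f_n‖_r = 1 and ‖|i|^{−λ} ∗ f_n‖_t → K. Then there exists a sequence {i_n} ⊂ ℤ^N such that the translated sequence v_n(i) := f_n(i + i_n) contains a subsequence converging in ℓ^r(ℤ^N) to some f with ‖f‖_r = 1 and ‖|i|^{−λ} ∗ f‖_t = K. Moreover, there exists g ∈ ℓ^s(ℤ^N) with ‖g‖_s = 1 such that Σ_{i≠j, i,j∈ℤ^N} f(i)g(j)/|i−j|^λ = K = sup{Σ_{i≠j} f'(i)g'(j)/|i−j|^λ : ‖f'‖_r = ‖g'‖_s = 1}; that is, (f, g) is a maximizing pair for the supercritical discrete Hardy–Littlewood–Sobolev inequality (the case 1/r + 1/s + λ/N > 2). -/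
/-!
Because the exponents are strictly supercritical, the kernel `|x|^{-λ}` lies in the `ℓ^q` for which
Young's inequality maps `ℓ^r` to `ℓ^t` (`young_ennreal`, `hls_bound`), so `K` is finite. The strict
inequality also leaves room to replace `r` by a slightly larger `r₂`; together with the
interpolation `‖u‖_{r₂} ≤ ‖u‖_∞^θ ‖u‖_r^{1-θ}` this shows that a maximizing sequence cannot tend to
`0` in the supremum norm (`nonvanishing`). After a translation the values at the origin stay away
from `0`, and a diagonal subsequence converges pointwise to some `F ≠ 0`.

The remainders `h_n = v_n - F` are then handled by the Brezis–Lieb lemma (`brezis_lieb`), applied to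
`v_n` in `ℓ^r` and to the convolutions in `ℓ^t`, where pointwise convergence holds since the kernel
belongs to the dual of `ℓ^r` (`tendsto_pairing`). With `a = ‖F‖_r^r ∈ (0, 1]` the two splittings
give `K^t ≤ K^t (a^{t/r} + (1-a)^{t/r})`, and since `t > r` and `K > 0`, this forces `a = 1`. Hence
no mass is lost, the convergence is strong, and `F` is a maximizer (`strong_convergence`).

The function `g` is the norming functional of `|i|^{-λ} ∗ F` (`exists_dual`), and Hölder's
inequality identifies `K` with the supremum of the bilinear form.
-/

open Filter Topology

noncomputable section

/-- Euclidean distance between lattice points, viewed in `ℝ^N`. -/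
def eudist {N : ℕ} (i j : ZN N) : ℝ := Real.sqrt (∑ k, ((i k : ℝ) - (j k : ℝ)) ^ 2)

/-- `(|i|^{-λ} ∗ f)(i) = Σ_{j ≠ i} f(j)/|i-j|^λ`. -/
def hlsConv {N : ℕ} (lam : ℝ) (f : ZN N → ℝ) (i : ZN N) : ℝ :=
  ∑' j : ZN N, if j = i then 0 else f j / eudist i j ^ lam

/-- The bilinear HLS sum `Σ_{i ≠ j} f(i) g(j) / |i-j|^λ`. -/
def hlsSum {N : ℕ} (lam : ℝ) (f g : ZN N → ℝ) : ℝ :=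
  ∑' q : ZN N × ZN N, if q.1 = q.2 then 0 else f q.1 * g q.2 / eudist q.1 q.2 ^ lam

/-! ### Norms on the lattice -/

theorem lpNorm_nonneg {N : ℕ} (p : ℝ) (u : ZN N → ℝ) : 0 ≤ lpNorm p u := by
  unfold lpNorm; positivity

theorem lpNorm_rpow {N : ℕ} {p : ℝ} (hp : 0 < p) (u : ZN N → ℝ) :
    lpNorm p u ^ p = ∑' x, |u x| ^ p := by
  unfold lpNorm
  rw [← Real.rpow_mul (tsum_nonneg fun x => by positivity), one_div, inv_mul_cancel₀ hp.ne',
    Real.rpow_one]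

theorem memlp_iff {N : ℕ} {p : ℝ} (hp : 0 < p) (u : ZN N → ℝ) :
    Memlp p u ↔ Memℓp u (ENNReal.ofReal p) := by
  rw [memℓp_gen_iff (by rwa [ENNReal.toReal_ofReal hp.le]), ENNReal.toReal_ofReal hp.le]
  rfl

/-- A function with summable `p`-th power, as an element of Mathlib's `lp` space. -/
def toLp {N : ℕ} {p : ℝ} (hp : 0 < p) (u : ZN N → ℝ) (hu : Memlp p u) :
    lp (fun _ : ZN N => ℝ) (ENNReal.ofReal p) := ⟨u, (memlp_iff hp u).1 hu⟩

theorem norm_lp_eq {N : ℕ} {p : ℝ} (hp : 0 < p) (u : lp (fun _ : ZN N => ℝ) (ENNReal.ofReal p)) :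
    ‖u‖ = lpNorm p (u : ZN N → ℝ) := by
  rw [lp.norm_eq_tsum_rpow (by rwa [ENNReal.toReal_ofReal hp.le]), ENNReal.toReal_ofReal hp.le]
  rfl

theorem norm_toLp {N : ℕ} {p : ℝ} (hp : 0 < p) (u : ZN N → ℝ) (hu : Memlp p u) :
    ‖toLp hp u hu‖ = lpNorm p u := norm_lp_eq hp _

theorem Memlp.sub {N : ℕ} {p : ℝ} (hp : 0 < p) {u v : ZN N → ℝ} (hu : Memlp p u)
    (hv : Memlp p v) : Memlp p (fun x => u x - v x) :=
  (memlp_iff hp _).2 (((memlp_iff hp _).1 hu).sub ((memlp_iff hp _).1 hv))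

theorem Memlp.const_mul {N : ℕ} {p : ℝ} (hp : 0 < p) {u : ZN N → ℝ} (hu : Memlp p u) (c : ℝ) :
    Memlp p (fun x => c * u x) :=
  (memlp_iff hp _).2 (((memlp_iff hp _).1 hu).const_smul c)

theorem lpNorm_const_mul {N : ℕ} {p : ℝ} (hp : 0 < p) (u : ZN N → ℝ) (c : ℝ) :
    lpNorm p (fun x => c * u x) = |c| * lpNorm p u := by
  unfold lpNorm
  simp_rw [abs_mul, Real.mul_rpow (abs_nonneg _) (abs_nonneg _), tsum_mul_left]
  rw [Real.mul_rpow (by positivity) (tsum_nonneg fun x => by positivity),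
    ← Real.rpow_mul (abs_nonneg _), one_div, mul_inv_cancel₀ hp.ne', Real.rpow_one]

theorem lpNorm_sub_le {N : ℕ} {p : ℝ} (hp : 1 ≤ p) {u v : ZN N → ℝ} (hu : Memlp p u)
    (hv : Memlp p v) : lpNorm p (fun x => u x - v x) ≤ lpNorm p u + lpNorm p v := by
  have hp0 : 0 < p := by linarith
  have : Fact (1 ≤ ENNReal.ofReal p) := ⟨by simpa using hp⟩
  have := norm_sub_le (toLp hp0 u hu) (toLp hp0 v hv)
  rw [norm_toLp, norm_toLp] at this
  rwa [norm_lp_eq hp0] at this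

theorem abs_le_lpNorm {N : ℕ} {p : ℝ} (hp : 0 < p) {u : ZN N → ℝ} (hu : Memlp p u) (x : ZN N) :
    |u x| ≤ lpNorm p u := by
  have h : |u x| ^ p ≤ lpNorm p u ^ p := by
    rw [lpNorm_rpow hp]
    exact hu.le_tsum x fun _ _ => by positivity
  exact (Real.rpow_le_rpow_iff (abs_nonneg _) (lpNorm_nonneg _ _) hp).1 h

theorem Memlp.translate {N : ℕ} {p : ℝ} {u : ZN N → ℝ} (hu : Memlp p u) (a : ZN N) :
    Memlp p (fun x => u (x + a)) :=
  (Equiv.addRight a).summable_iff.2 hu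

theorem lpNorm_translate {N : ℕ} (p : ℝ) (u : ZN N → ℝ) (a : ZN N) :
    lpNorm p (fun x => u (x + a)) = lpNorm p u := by
  unfold lpNorm
  rw [← (Equiv.addRight a).tsum_eq (fun x => |u x| ^ p)]
  rfl

/-! ### The Brezis–Lieb lemma -/

/-- The Brezis–Lieb lemma on the lattice: for a sequence bounded in `ℓ^p` that tends to `0`
pointwise, adding a fixed `F ∈ ℓ^p` asymptotically adds `‖F‖_p^p` to the `p`-th power of the norm.
This is immediate for finitely supported `F`; the general case follows by density, since
`G ↦ ‖h n + G‖^p - ‖h n‖^p` is continuous uniformly in `n`. -/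
theorem brezis_lieb_s2 {N : ℕ} {p : ℝ} (hp : 1 ≤ p) (h : ℕ → ZN N → ℝ) (F : ZN N → ℝ)
    (hh : ∀ n, Memlp p (h n)) (hF : Memlp p F) (C : ℝ) (hC : ∀ n, lpNorm p (h n) ≤ C)
    (h0 : ∀ x, Tendsto (fun n => h n x) atTop (𝓝 0)) :
    Tendsto (fun n => lpNorm p (fun x => h n x + F x) ^ p - lpNorm p (h n) ^ p) atTop
      (𝓝 (lpNorm p F ^ p)) := by
  have hp0 : 0 < p := by linarith
  have hfact : Fact (1 ≤ ENNReal.ofReal p) := ⟨by simpa using hp⟩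
  set H : ℕ → lp (fun _ : ZN N => ℝ) (ENNReal.ofReal p) := fun n => toLp hp0 (h n) (hh n) with hH
  set f := toLp hp0 F hF with hf
  set g : Finset (ZN N) → lp (fun _ : ZN N => ℝ) (ENNReal.ofReal p) :=
    fun A => ∑ x ∈ A, lp.single (ENNReal.ofReal p) x (f x) with hg
  have hgf : Tendsto g atTop (𝓝 f) := lp.hasSum_single ENNReal.ofReal_ne_top f
  have hHC : ∀ n, ‖H n‖ ≤ C := fun n => by rw [hH]; simpa only [norm_toLp] using hC n
  have hgapp : ∀ A x, g A x = if x ∈ A then F x else 0 := by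
    intro A x
    rw [hg]
    simp only [lp.coeFn_sum, Finset.sum_apply, lp.single_apply, Pi.single_apply]
    simp [hf, toLp]
  have key : Tendsto (fun n => ‖H n + f‖ ^ p - ‖H n‖ ^ p) atTop (𝓝 (‖f‖ ^ p)) := by
    refine TendstoUniformlyOnFilter.tendsto_of_eventually_tendsto
      (F := fun A n => ‖H n + g A‖ ^ p - ‖H n‖ ^ p) (p := atTop)
      (L := fun A => ‖g A‖ ^ p) ?_ (Eventually.of_forall fun A => ?_)
      ((hgf.norm).rpow_const (Or.inr hp0.le))
    · rw [Metric.tendstoUniformlyOnFilter_iff]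
      intro ε hε
      have huc : UniformContinuousOn (fun y : ℝ => y ^ p) (Set.Icc 0 (C + (‖f‖ + 1))) :=
        isCompact_Icc.uniformContinuousOn_of_continuous
          (Real.continuous_rpow_const hp0.le).continuousOn
      rw [Metric.uniformContinuousOn_iff] at huc
      obtain ⟨δ, hδ, huc⟩ := huc ε hε
      have hev : ∀ᶠ A in atTop, dist (g A) f < min δ 1 :=
        (Metric.tendsto_nhds.1 hgf) _ (by positivity)
      refine (hev.prod_mk (Eventually.of_forall fun _ => trivial)).mono ?_
      rintro ⟨A, n⟩ ⟨hA, -⟩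
      simp only at hA ⊢
      have hA1 : ‖g A‖ ≤ ‖f‖ + 1 := by
        have h1 : ‖g A - f‖ < 1 := by
          rw [← dist_eq_norm]; exact hA.trans_le (min_le_right _ _)
        have h2 := norm_sub_norm_le (g A) f
        linarith
      have := huc ‖H n + f‖ ⟨norm_nonneg _, (norm_add_le _ _).trans (by linarith [hHC n])⟩
        ‖H n + g A‖ ⟨norm_nonneg _, (norm_add_le _ _).trans (by linarith [hHC n])⟩ ?_
      · rw [Real.dist_eq] at this ⊢
        convert this using 2
        ring
      · refine lt_of_le_of_lt ?_ (hA.trans_le (min_le_left _ _))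
        rw [Real.dist_eq, dist_comm, dist_eq_norm]
        refine (abs_norm_sub_norm_le _ _).trans (le_of_eq ?_)
        congr 1
        abel
    · -- off the finite set `A` the two `p`-th power sums agree termwise
      have e1 : ∀ n, ‖H n + g A‖ ^ p - ‖H n‖ ^ p
          = ∑ x ∈ A, (|h n x + F x| ^ p - |h n x| ^ p) := by
        intro n
        have hs : Memlp p (H n + g A : lp (fun _ : ZN N => ℝ) (ENNReal.ofReal p)) :=
          (memlp_iff hp0 _).2 (lp.memℓp _)
        have hs' : Memlp p (H n : ZN N → ℝ) := hh n
        rw [norm_lp_eq hp0, norm_lp_eq hp0, lpNorm_rpow hp0, lpNorm_rpow hp0,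
          ← Summable.tsum_sub hs hs', tsum_eq_sum (s := A)]
        · refine Finset.sum_congr rfl fun x hx => ?_
          rw [lp.coeFn_add, Pi.add_apply, hgapp, if_pos hx]
          rfl
        · intro x hx
          rw [lp.coeFn_add, Pi.add_apply, hgapp, if_neg hx, add_zero, sub_self]
      have e2 : ‖g A‖ ^ p = ∑ x ∈ A, (|0 + F x| ^ p - |(0 : ℝ)| ^ p) := by
        rw [norm_lp_eq hp0, lpNorm_rpow hp0, tsum_eq_sum (s := A)]
        · refine Finset.sum_congr rfl fun x hx => ?_
          rw [hgapp, if_pos hx]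
          simp [Real.zero_rpow hp0.ne']
        · intro x hx
          rw [hgapp, if_neg hx]
          simp [Real.zero_rpow hp0.ne']
      simp_rw [e1]
      rw [e2]
      refine tendsto_finsetSum _ fun x _ => Tendsto.sub ?_ ?_
      · exact (((h0 x).add_const _).abs).rpow_const (Or.inr hp0.le)
      · exact ((h0 x).abs).rpow_const (Or.inr hp0.le)
  simp only [hf, hH, norm_toLp] at key
  convert key using 4
  rw [norm_lp_eq hp0]
  rfl

/-! ### The Young inequality for convolutions -/

/-- Young's convolution inequality on an abelian group, in `ℝ≥0∞`. The integrand is split as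
`κ φ = (κ^q φ^r)^{1/t} (κ^q)^{1/q-1/t} (φ^r)^{1/r-1/t}` and Hölder's inequality for three factors
is applied. -/
theorem young_ennreal {G : Type*} [AddCommGroup G] {q r t : ℝ} (hq : 1 ≤ q) (hr : 1 ≤ r)
    (ht : 0 < t) (hqrt : 1 / q + 1 / r = 1 + 1 / t) (κ φ : G → ENNReal) :
    ∑' i, (∑' j, κ (i - j) * φ j) ^ t ≤ (∑' i, κ i ^ q) ^ (t / q) * (∑' i, φ i ^ r) ^ (t / r) := by
  have hq0 : 0 < q := by linarith
  have hr0 : 0 < r := by linarith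
  have hq1 : 1 / q ≤ 1 := by rw [div_le_one hq0]; exact hq
  have hr1 : 1 / r ≤ 1 := by rw [div_le_one hr0]; exact hr
  have ha : 0 ≤ 1 / q - 1 / t := by linarith
  have hb : 0 ≤ 1 / r - 1 / t := by linarith
  have ht' : 0 ≤ 1 / t := by positivity
  set A := ∑' i, κ i ^ q with hA
  set B := ∑' i, φ i ^ r with hB
  have hshift : ∀ i, ∑' j, κ (i - j) ^ q = A := fun i =>
    (Equiv.subLeft i).tsum_eq (fun x => κ x ^ q)
  have hshift' : ∀ j, ∑' i, κ (i - j) ^ q = A := fun j =>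
    (Equiv.subRight j).tsum_eq (fun x => κ x ^ q)
  have h1 : ∀ i, ∑' j, κ (i - j) * φ j ≤
      (∑' j, κ (i - j) ^ q * φ j ^ r) ^ (1 / t) * (A ^ (1 / q - 1 / t) * B ^ (1 / r - 1 / t)) := by
    intro i
    let _ : MeasurableSpace G := ⊤
    have := ENNReal.lintegral_prod_norm_pow_le (μ := MeasureTheory.Measure.count)
      (Finset.univ : Finset (Fin 3))
      (f := ![fun j => κ (i - j) ^ q * φ j ^ r, fun j => κ (i - j) ^ q, fun j => φ j ^ r])
      (p := ![1 / t, 1 / q - 1 / t, 1 / r - 1 / t])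
      (fun _ _ => (Measurable.of_discrete).aemeasurable)
      (by simp only [Fin.sum_univ_three, Matrix.cons_val]; linarith)
      (by
        intro k _
        fin_cases k
        · exact ht'
        · exact ha
        · exact hb)
    simp only [MeasureTheory.lintegral_count, Fin.prod_univ_three, Matrix.cons_val] at this
    rw [hshift, ← hB, mul_assoc] at this
    refine le_trans (le_of_eq (tsum_congr fun j => ?_)) this
    have e : ∀ (x : ENNReal) (c : ℝ), 0 < c → 0 ≤ 1 / c - 1 / t →
        (x ^ c) ^ (1 / t) * (x ^ c) ^ (1 / c - 1 / t) = x := by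
      intro x c hc hct
      rw [← ENNReal.rpow_add_of_nonneg _ _ ht' hct, ← ENNReal.rpow_mul]
      rw [show c * (1 / t + (1 / c - 1 / t)) = 1 by field_simp; ring, ENNReal.rpow_one]
    rw [ENNReal.mul_rpow_of_nonneg _ _ ht']
    nth_rw 1 [← e (κ (i - j)) q hq0 ha, ← e (φ j) r hr0 hb]
    ring
  calc ∑' i, (∑' j, κ (i - j) * φ j) ^ t
      ≤ ∑' i, (∑' j, κ (i - j) ^ q * φ j ^ r) *
          (A ^ (1 / q - 1 / t) * B ^ (1 / r - 1 / t)) ^ t := by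
        refine ENNReal.tsum_le_tsum fun i => ?_
        refine (ENNReal.rpow_le_rpow (h1 i) ht.le).trans (le_of_eq ?_)
        rw [ENNReal.mul_rpow_of_nonneg _ _ ht.le, ← ENNReal.rpow_mul, one_div,
          inv_mul_cancel₀ ht.ne', ENNReal.rpow_one]
    _ = (A * B) * (A ^ (1 / q - 1 / t) * B ^ (1 / r - 1 / t)) ^ t := by
        rw [ENNReal.tsum_mul_right, ENNReal.tsum_comm]
        simp_rw [ENNReal.tsum_mul_right, hshift', ENNReal.tsum_mul_left]
        rw [← hB]
    _ = A ^ (t / q) * B ^ (t / r) := by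
        rw [ENNReal.mul_rpow_of_nonneg _ _ ht.le, ← ENNReal.rpow_mul, ← ENNReal.rpow_mul]
        have e : ∀ (x : ENNReal) (c : ℝ), 0 ≤ 1 / c - 1 / t →
            x ^ (t / c) = x * x ^ ((1 / c - 1 / t) * t) := by
          intro x c hc
          nth_rw 2 [← ENNReal.rpow_one x]
          rw [← ENNReal.rpow_add_of_nonneg _ _ zero_le_one (by positivity)]
          congr 1
          field_simp
          ring
        rw [e A q ha, e B r hb]
        ring

/-! ### The convolution operator -/

/-- The convolution kernel `|x|^{-λ}`, set to `0` at the origin. -/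
def hlsKer {N : ℕ} (lam : ℝ) (x : ZN N) : ℝ := if x = 0 then 0 else 1 / eudist x 0 ^ lam

theorem ker_nonneg {N : ℕ} (lam : ℝ) (x : ZN N) : 0 ≤ hlsKer lam x := by
  unfold hlsKer eudist; split_ifs <;> positivity

theorem eudist_comm {N : ℕ} (i j : ZN N) : eudist i j = eudist j i := by
  unfold eudist
  congr 1
  exact Finset.sum_congr rfl fun k _ => by ring

theorem eudist_sub {N : ℕ} (i j : ZN N) : eudist (i - j) 0 = eudist i j := by
  unfold eudist
  simp

theorem ker_sub_comm {N : ℕ} (lam : ℝ) (i j : ZN N) : hlsKer lam (i - j) = hlsKer lam (j - i) := by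
  unfold hlsKer
  rw [eudist_sub, eudist_sub, eudist_comm]
  simp only [sub_eq_zero, eq_comm]

theorem ker_mul {N : ℕ} (lam : ℝ) (i j : ZN N) (c : ℝ) :
    (if j = i then 0 else c / eudist i j ^ lam) = hlsKer lam (i - j) * c := by
  unfold hlsKer
  rw [eudist_sub]
  by_cases h : j = i
  · simp [h]
  · rw [if_neg h, if_neg (by rw [sub_eq_zero]; exact fun h' => h h'.symm)]
    ring

theorem hlsConv_eq {N : ℕ} (lam : ℝ) (f : ZN N → ℝ) (i : ZN N) :
    hlsConv lam f i = ∑' j, hlsKer lam (i - j) * f j := by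
  unfold hlsConv
  exact tsum_congr fun j => ker_mul lam i j _

theorem norm_int_eq {N : ℕ} (x : ZN N) :
    eudist x 0 = ‖(WithLp.toLp 2 (fun k => (x k : ℝ)) : EuclideanSpace ℝ (Fin N))‖ := by
  unfold eudist
  rw [EuclideanSpace.norm_eq]
  simp

/-- The kernel `|x|^{-λ}` lies in `ℓ^q(ℤ^N)` as soon as `λ q > N`, by comparison with the lattice
sums over `ℤ^N ⊂ ℝ^N`. -/
theorem summable_ker_rpow {N : ℕ} {lam q : ℝ} (hq : 0 < q) (h : (N : ℝ) < lam * q) :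
    Summable fun x : ZN N => hlsKer lam x ^ q := by
  let b := (EuclideanSpace.basisFun (Fin N) ℝ).toBasis
  let L : Submodule ℤ (EuclideanSpace ℝ (Fin N)) := Submodule.span ℤ (Set.range b)
  have hfin : Module.finrank ℤ L = N := by
    rw [Module.finrank_eq_card_basis (b.restrictScalars ℤ)]
    simp
  have hsum := ZLattice.summable_norm_rpow L (-(lam * q)) (by rw [hfin]; linarith)
  have hmemL : ∀ x : ZN N, (WithLp.toLp 2 (fun k => (x k : ℝ)) : EuclideanSpace ℝ (Fin N)) ∈ L := by
    intro x
    have : (WithLp.toLp 2 (fun k => (x k : ℝ)) : EuclideanSpace ℝ (Fin N)) = ∑ k, x k • b k := by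
      ext k
      simp [b, Pi.single_apply]
    rw [this]
    exact Submodule.sum_mem _ fun k _ => Submodule.smul_mem _ _ (Submodule.subset_span ⟨k, rfl⟩)
  have hinj : Function.Injective (fun x : ZN N => (⟨_, hmemL x⟩ : L)) := by
    intro x y hxy
    have := congrArg (fun z : L => (z : EuclideanSpace ℝ (Fin N))) hxy
    ext k
    have := congrArg (fun z : EuclideanSpace ℝ (Fin N) => z k) this
    simpa using this
  refine Summable.of_nonneg_of_le (fun x => Real.rpow_nonneg (ker_nonneg _ _) _) (fun x => ?_)
    (hsum.comp_injective hinj)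
  simp only [Function.comp, Submodule.coe_norm]
  rw [← norm_int_eq]
  have h0 : 0 ≤ eudist x 0 := Real.sqrt_nonneg _
  unfold hlsKer
  split_ifs with hx
  · rw [Real.zero_rpow hq.ne']
    positivity
  · rw [Real.rpow_neg h0, one_div, Real.inv_rpow (by positivity), ← Real.rpow_mul h0]

/-- The supercritical Hardy–Littlewood–Sobolev inequality for the convolution operator. Since the
exponents are strictly supercritical, the kernel lies in the `ℓ^q` required by Young's
inequality. The sums defining the convolution converge absolutely, and the convolution of `|u|` is
in `ℓ^t` as well, which is what the double sum `hlsSum` needs in order to be summable. -/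
theorem hls_bound {N : ℕ} {r t lam : ℝ} (hr : 1 < r) (ht : 1 < t) (hlamN : lam < (N : ℝ))
    (hN : 0 < (N : ℝ)) (hsup : 1 / r + lam / (N : ℝ) > 1 + 1 / t) :
    ∃ C : ℝ, 0 ≤ C ∧ ∀ u : ZN N → ℝ, Memlp r u →
      (∀ i, Summable fun j => hlsKer lam (i - j) * |u j|) ∧ Memlp t (hlsConv lam u) ∧
      Memlp t (fun i => ∑' j, hlsKer lam (i - j) * |u j|) ∧
      lpNorm t (hlsConv lam u) ≤ C * lpNorm r u := by
  have hr0 : 0 < r := by linarith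
  have ht0 : 0 < t := by linarith
  have hr1 : 1 / r < 1 := by rw [div_lt_one hr0]; exact hr
  have ht' : 0 < 1 / t := by positivity
  have hl1 : lam / N < 1 := by rw [div_lt_one hN]; exact hlamN
  set w : ℝ := 1 + 1 / t - 1 / r with hw
  have hw0 : 0 < w := by linarith
  have hw1 : w < lam / N := by linarith
  set q : ℝ := 1 / w with hqdef
  have hq1 : 1 ≤ q := by rw [hqdef, le_div_iff₀ hw0]; linarith
  have hq0 : 0 < q := by linarith
  have hqw : 1 / q = w := by rw [hqdef, one_div_one_div]
  have hker : Summable fun x : ZN N => hlsKer lam x ^ q := by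
    refine summable_ker_rpow hq0 ?_
    rw [lt_div_iff₀ hN] at hw1
    rw [hqdef, mul_one_div, lt_div_iff₀ hw0]
    linarith
  set A : ℝ := ∑' x : ZN N, hlsKer lam x ^ q with hA
  have hA0 : 0 ≤ A := tsum_nonneg fun x => Real.rpow_nonneg (ker_nonneg _ _) _
  refine ⟨A ^ (1 / q), by positivity, fun u hu => ?_⟩
  set B : ℝ := ∑' x, |u x| ^ r with hB
  have hB0 : 0 ≤ B := tsum_nonneg fun x => by positivity
  have hY := young_ennreal hq1 hr.le ht0 (by rw [hqw]; linarith)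
    (fun x : ZN N => ENNReal.ofReal (hlsKer lam x)) (fun x => ENNReal.ofReal |u x|)
  simp_rw [ENNReal.ofReal_rpow_of_nonneg (ker_nonneg _ _) hq0.le,
    ENNReal.ofReal_rpow_of_nonneg (abs_nonneg _) hr0.le,
    ← ENNReal.ofReal_mul (ker_nonneg _ _)] at hY
  rw [← ENNReal.ofReal_tsum_of_nonneg (fun x => Real.rpow_nonneg (ker_nonneg _ _) _) hker,
    ← ENNReal.ofReal_tsum_of_nonneg (fun x => by positivity) hu, ← hA, ← hB,
    ENNReal.ofReal_rpow_of_nonneg hA0 (by positivity),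
    ENNReal.ofReal_rpow_of_nonneg hB0 (by positivity), ← ENNReal.ofReal_mul (by positivity)] at hY
  have hnn : ∀ i j, 0 ≤ hlsKer lam (i - j) * |u j| := fun i j =>
    mul_nonneg (ker_nonneg _ _) (abs_nonneg _)
  have hsummable : ∀ i, Summable fun j => hlsKer lam (i - j) * |u j| := by
    intro i
    have h1 : (∑' j, ENNReal.ofReal (hlsKer lam (i - j) * |u j|)) ^ t ≠ ⊤ :=
      ne_top_of_le_ne_top ENNReal.ofReal_ne_top ((ENNReal.le_tsum i).trans hY)
    have h2 : ∑' j, ENNReal.ofReal (hlsKer lam (i - j) * |u j|) ≠ ⊤ := by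
      intro h
      rw [h, ENNReal.top_rpow_of_pos ht0] at h1
      exact h1 rfl
    refine (ENNReal.summable_toReal h2).congr fun j => ?_
    rw [ENNReal.toReal_ofReal (hnn i j)]
  set V : ZN N → ℝ := fun i => ∑' j, hlsKer lam (i - j) * |u j| with hV
  have hV0 : ∀ i, 0 ≤ V i := fun i => tsum_nonneg (hnn i)
  have hY' : ∑' i, ENNReal.ofReal (V i ^ t) ≤ ENNReal.ofReal (A ^ (t / q) * B ^ (t / r)) := by
    refine le_trans (le_of_eq (tsum_congr fun i => ?_)) hY
    rw [← ENNReal.ofReal_tsum_of_nonneg (hnn i) (hsummable i),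
      ENNReal.ofReal_rpow_of_nonneg (hV0 i) ht0.le]
  have hVs : Summable fun i => V i ^ t := by
    refine (ENNReal.summable_toReal (ne_top_of_le_ne_top ENNReal.ofReal_ne_top hY')).congr
      fun i => ?_
    rw [ENNReal.toReal_ofReal (Real.rpow_nonneg (hV0 i) _)]
  have hVle : ∑' i, V i ^ t ≤ A ^ (t / q) * B ^ (t / r) := by
    rw [← ENNReal.ofReal_tsum_of_nonneg (fun i => Real.rpow_nonneg (hV0 i) _) hVs,
      ENNReal.ofReal_le_ofReal_iff (by positivity)] at hY'
    exact hY'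
  have hle : ∀ i, |hlsConv lam u i| ≤ V i := by
    intro i
    rw [hlsConv_eq]
    have := norm_tsum_le_tsum_norm (f := fun j => hlsKer lam (i - j) * u j)
      ((hsummable i).congr fun j => by
        rw [Real.norm_eq_abs, abs_mul, abs_of_nonneg (ker_nonneg _ _)])
    simpa [abs_mul, abs_of_nonneg (ker_nonneg _ _)] using this
  have hle' : ∀ i, |hlsConv lam u i| ^ t ≤ V i ^ t := fun i =>
    Real.rpow_le_rpow (abs_nonneg _) (hle i) ht0.le
  have hmem : Memlp t (hlsConv lam u) := hVs.of_nonneg_of_le (fun i => by positivity) hle'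
  refine ⟨hsummable, hmem, ?_, ?_⟩
  · unfold Memlp
    simpa only [abs_of_nonneg (hV0 _)] using hVs
  · have h1 : ∑' i, |hlsConv lam u i| ^ t ≤ A ^ (t / q) * B ^ (t / r) :=
      (hmem.tsum_le_tsum hle' hVs).trans hVle
    have h2 := Real.rpow_le_rpow (tsum_nonneg fun i => by positivity) h1
      (by positivity : 0 ≤ 1 / t)
    rw [Real.mul_rpow (by positivity) (by positivity), ← Real.rpow_mul hA0,
      ← Real.rpow_mul hB0] at h2
    rw [show t / q * (1 / t) = 1 / q by field_simp, show t / r * (1 / t) = 1 / r by field_simp]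
      at h2
    exact h2

/-! ### Duality and weak convergence -/

theorem holder {N : ℕ} {p q : ℝ} (hpq : p.HolderConjugate q) {u v : ZN N → ℝ} (hu : Memlp p u)
    (hv : Memlp q v) : (Summable fun x => |u x| * |v x|) ∧
      ∑' x, |u x| * |v x| ≤ lpNorm p u * lpNorm q v :=
  Real.summable_and_inner_le_Lp_mul_Lq_tsum_of_nonneg hpq (fun _ => abs_nonneg _)
    (fun _ => abs_nonneg _) hu hv

theorem abs_tsum_mul_le {N : ℕ} {p q : ℝ} (hpq : p.HolderConjugate q) {u v : ZN N → ℝ}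
    (hu : Memlp p u) (hv : Memlp q v) : (Summable fun x => u x * v x) ∧
      |∑' x, u x * v x| ≤ lpNorm p u * lpNorm q v := by
  obtain ⟨h1, h2⟩ := holder hpq hu hv
  simp_rw [← abs_mul] at h1 h2
  refine ⟨h1.of_abs, le_trans ?_ h2⟩
  have h3 := norm_tsum_le_tsum_norm (f := fun x => u x * v x)
    (by simpa only [Real.norm_eq_abs] using h1)
  simpa only [Real.norm_eq_abs] using h3

/-- A sequence bounded in `ℓ^q` that tends to `0` pointwise tends to `0` weakly. The finite partial
sums of the pairing with `w ∈ ℓ^p` converge uniformly in `n`, because the tails of `w` are small. -/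
theorem tendsto_pairing {N : ℕ} {p q : ℝ} (hpq : p.HolderConjugate q) {w : ZN N → ℝ}
    (hw : Memlp p w) (h : ℕ → ZN N → ℝ) (hh : ∀ n, Memlp q (h n)) (C : ℝ)
    (hC : ∀ n, lpNorm q (h n) ≤ C) (h0 : ∀ x, Tendsto (fun n => h n x) atTop (𝓝 0)) :
    Tendsto (fun n => ∑' x, w x * h n x) atTop (𝓝 0) := by
  classical
  have hp0 : 0 < p := hpq.pos
  let wA : Finset (ZN N) → ZN N → ℝ := fun A x => if x ∈ A then 0 else w x
  have hpow : ∀ A x, |wA A x| ^ p = ({x | x ∉ A} : Set (ZN N)).indicator (fun x => |w x| ^ p) x := by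
    intro A x
    by_cases hx : x ∈ A <;> simp [wA, hx, Real.zero_rpow hp0.ne']
  have hwA : ∀ A, Memlp p (wA A) := by
    intro A
    refine (Summable.indicator hw {x | x ∉ A}).congr fun x => ?_
    rw [hpow]
  have hnorm : Tendsto (fun A => lpNorm p (wA A)) atTop (𝓝 0) := by
    have h1 := (tendsto_tsum_compl_atTop_zero (fun x => |w x| ^ p)).rpow_const
      (p := 1 / p) (Or.inr (by positivity))
    rw [Real.zero_rpow (by positivity)] at h1
    refine h1.congr fun A => ?_
    unfold lpNorm
    simp_rw [hpow]
    rw [← tsum_subtype]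
    rfl
  have hC0 : 0 ≤ C := (lpNorm_nonneg _ _).trans (hC 0)
  refine TendstoUniformlyOnFilter.tendsto_of_eventually_tendsto
      (F := fun A n => ∑ x ∈ A, w x * h n x) (p := (atTop : Filter (Finset (ZN N))))
      (L := fun A => ∑ x ∈ A, w x * 0) ?_ (Eventually.of_forall fun A => ?_) (by simp)
  · rw [Metric.tendstoUniformlyOnFilter_iff]
    intro ε hε
    have hlim := hnorm.mul_const C
    rw [zero_mul] at hlim
    refine ((hlim.eventually (gt_mem_nhds hε)).prod_mk
      (Eventually.of_forall fun _ => trivial)).mono ?_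
    rintro ⟨A, n⟩ ⟨hA, -⟩
    refine lt_of_le_of_lt ?_ hA
    have e : ∑' x, w x * h n x - ∑ x ∈ A, w x * h n x = ∑' x, wA A x * h n x := by
      have e1 : ∑ x ∈ A, w x * h n x = ∑' x, (if x ∈ A then w x * h n x else 0) := by
        rw [tsum_eq_sum (s := A)]
        · exact Finset.sum_congr rfl fun x hx => by rw [if_pos hx]
        · intro x hx
          rw [if_neg hx]
      have e2 : Summable fun x => (if x ∈ A then w x * h n x else 0) :=
        summable_of_ne_finset_zero (s := A) fun x hx => by rw [if_neg hx]
      rw [e1, ← Summable.tsum_sub (abs_tsum_mul_le hpq hw (hh n)).1 e2]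
      refine tsum_congr fun x => ?_
      by_cases hx : x ∈ A <;> simp [wA, hx]
    simp only
    rw [Real.dist_eq, e]
    exact ((abs_tsum_mul_le hpq (hwA A) (hh n)).2).trans
      (mul_le_mul_of_nonneg_left (hC n) (lpNorm_nonneg _ _))
  · exact tendsto_finsetSum _ fun x _ => (h0 x).const_mul _

/-! ### Algebra of the convolution and norming functionals -/

theorem hlsConv_translate {N : ℕ} (lam : ℝ) (u : ZN N → ℝ) (a i : ZN N) :
    hlsConv lam (fun x => u (x + a)) i = hlsConv lam u (i + a) := by
  rw [hlsConv_eq, hlsConv_eq,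
    ← (Equiv.addRight a).tsum_eq (fun j => hlsKer lam (i + a - j) * u j)]
  refine tsum_congr fun j => ?_
  simp

theorem hlsConv_const_mul {N : ℕ} (lam : ℝ) (u : ZN N → ℝ) (c : ℝ) :
    hlsConv lam (fun x => c * u x) = fun i => c * hlsConv lam u i := by
  ext i
  rw [hlsConv_eq, hlsConv_eq, ← tsum_mul_left]
  exact tsum_congr fun j => by ring

theorem summable_of_abs_ker {N : ℕ} {lam : ℝ} {u : ZN N → ℝ} {i : ZN N}
    (h : Summable fun j => hlsKer lam (i - j) * |u j|) :
    Summable fun j => hlsKer lam (i - j) * u j := by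
  refine Summable.of_abs (h.congr fun j => ?_)
  rw [abs_mul, abs_of_nonneg (ker_nonneg _ _)]

theorem hlsConv_sub {N : ℕ} {lam : ℝ} {u v : ZN N → ℝ} {i : ZN N}
    (hu : Summable fun j => hlsKer lam (i - j) * |u j|)
    (hv : Summable fun j => hlsKer lam (i - j) * |v j|) :
    hlsConv lam (fun x => u x - v x) i = hlsConv lam u i - hlsConv lam v i := by
  rw [hlsConv_eq, hlsConv_eq, hlsConv_eq,
    ← (summable_of_abs_ker hu).tsum_sub (summable_of_abs_ker hv)]
  exact tsum_congr fun j => by ring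

/-- If `|u| ≤ c` and `‖u‖_r = 1`, then `‖u‖_q` is at most `c^{(q-r)/q}` for `q ≥ r`. -/
theorem lpNorm_interp {N : ℕ} {r q c : ℝ} (hr : 0 < r) (hrq : r ≤ q) (hc : 0 ≤ c)
    {u : ZN N → ℝ} (hu : Memlp r u) (hn : lpNorm r u = 1) (hb : ∀ x, |u x| ≤ c) :
    Memlp q u ∧ lpNorm q u ≤ c ^ ((q - r) / q) := by
  have hq : 0 < q := by linarith
  have h1 : ∀ x, |u x| ^ q ≤ c ^ (q - r) * |u x| ^ r := by
    intro x
    have : |u x| ^ q = |u x| ^ (q - r) * |u x| ^ r := by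
      rw [← Real.rpow_add_of_nonneg (abs_nonneg _) (by linarith) hr.le]
      congr 1
      ring
    rw [this]
    have := Real.rpow_le_rpow (abs_nonneg _) (hb x) (by linarith : 0 ≤ q - r)
    gcongr
  have hs : Summable fun x => c ^ (q - r) * |u x| ^ r := hu.mul_left _
  have hm : Memlp q u := hs.of_nonneg_of_le (fun x => by positivity) h1
  refine ⟨hm, ?_⟩
  have h2 : ∑' x, |u x| ^ q ≤ c ^ (q - r) := by
    refine (Summable.tsum_le_tsum h1 hm hs).trans ?_
    rw [tsum_mul_left, ← lpNorm_rpow hr, hn, Real.one_rpow, mul_one]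
  have h3 := Real.rpow_le_rpow (tsum_nonneg fun x => by positivity) h2
    (by positivity : 0 ≤ 1 / q)
  rw [← Real.rpow_mul hc, mul_one_div] at h3
  exact h3

/-- The bilinear sum is the pairing of `g` with the convolution of `u`; Fubini applies because `|g|`
pairs absolutely with the convolution of `|u|`. -/
theorem hlsSum_eq {N : ℕ} {s t lam : ℝ} (hst : s.HolderConjugate t) {u g : ZN N → ℝ}
    (hsum : ∀ i, Summable fun j => hlsKer lam (i - j) * |u j|)
    (hV : Memlp t (fun i => ∑' j, hlsKer lam (i - j) * |u j|)) (hg : Memlp s g) :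
    hlsSum lam u g = ∑' j, g j * hlsConv lam u j := by
  have hV0 : ∀ i, 0 ≤ ∑' j, hlsKer lam (i - j) * |u j| := fun i =>
    tsum_nonneg fun j => mul_nonneg (ker_nonneg _ _) (abs_nonneg _)
  have hS : Summable fun p : ZN N × ZN N => g p.1 * (hlsKer lam (p.1 - p.2) * u p.2) := by
    refine Summable.of_abs ?_
    rw [summable_prod_of_nonneg (fun p => abs_nonneg _)]
    have e : ∀ i j, |g i * (hlsKer lam (i - j) * u j)| = |g i| * (hlsKer lam (i - j) * |u j|) := by
      intro i j
      rw [abs_mul, abs_mul, abs_of_nonneg (ker_nonneg _ _)]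
    simp_rw [e, tsum_mul_left]
    refine ⟨fun i => (hsum i).mul_left _, ?_⟩
    have := (holder hst hg hV).1
    simpa only [abs_of_nonneg (hV0 _)] using this
  have e : hlsSum lam u g = ∑' p : ZN N × ZN N, g p.1 * (hlsKer lam (p.1 - p.2) * u p.2) := by
    unfold hlsSum
    rw [← (Equiv.prodComm (ZN N) (ZN N)).tsum_eq
      (fun p : ZN N × ZN N => g p.1 * (hlsKer lam (p.1 - p.2) * u p.2))]
    refine tsum_congr fun p => ?_
    rw [eudist_comm, ker_mul]
    simp only [Equiv.prodComm_apply, Prod.fst_swap, Prod.snd_swap]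
    ring
  rw [e, hS.tsum_prod]
  refine tsum_congr fun i => ?_
  simp only
  rw [tsum_mul_left, hlsConv_eq]

/-- Norming functionals: a function `v ∈ ℓ^t` with `‖v‖_t = K > 0` is normed by
`sign v · |v|^{t-1} / K^{t-1}`, a unit vector of the dual space `ℓ^s`. -/
theorem exists_dual {N : ℕ} {s t K : ℝ} (hts : t.HolderConjugate s) (hK : 0 < K)
    {v : ZN N → ℝ} (hv : Memlp t v) (hn : lpNorm t v = K) :
    ∃ g : ZN N → ℝ, Memlp s g ∧ lpNorm s g = 1 ∧ ∑' j, g j * v j = K := by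
  have ht0 := hts.pos
  have hs0 := hts.symm.pos
  have ht1 := hts.lt
  have hmul : (t - 1) * s = t := hts.sub_one_mul_conj
  have hS : ∑' x, |v x| ^ t = K ^ t := by rw [← lpNorm_rpow ht0, hn]
  have hsg : ∀ j, |(if 0 ≤ v j then (1 : ℝ) else -1)| = 1 := by
    intro j; split_ifs <;> simp
  have hgp : ∀ j, |(if 0 ≤ v j then (1 : ℝ) else -1) * (|v j| ^ (t - 1) / K ^ (t - 1))| ^ s
      = |v j| ^ t / K ^ t := by
    intro j
    rw [abs_mul, hsg, one_mul, abs_of_nonneg (by positivity),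
      Real.div_rpow (by positivity) (by positivity), ← Real.rpow_mul (abs_nonneg _),
      ← Real.rpow_mul hK.le, hmul]
  have hvs : Summable fun x => |v x| ^ t / K ^ t := Summable.div_const hv _
  refine ⟨fun j => (if 0 ≤ v j then (1 : ℝ) else -1) * (|v j| ^ (t - 1) / K ^ (t - 1)), ?_, ?_, ?_⟩
  · exact hvs.congr fun j => (hgp j).symm
  · unfold lpNorm
    rw [tsum_congr hgp, tsum_div_const, hS, div_self (by positivity), Real.one_rpow]
  · have e : ∀ j, (if 0 ≤ v j then (1 : ℝ) else -1) * (|v j| ^ (t - 1) / K ^ (t - 1)) * v j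
        = |v j| ^ t / K ^ (t - 1) := by
      intro j
      have h1 : |v j| ^ t = |v j| ^ (t - 1) * |v j| := by
        conv_rhs => rw [← Real.rpow_add_one' (abs_nonneg _) (by linarith)]
        congr 1
        ring
      rw [h1]
      split_ifs with h
      · rw [abs_of_nonneg h]; ring
      · rw [abs_of_neg (not_le.1 h)]; ring
    rw [tsum_congr e, tsum_div_const, hS, ← Real.rpow_sub hK]
    simp

/-! ### Compactness of maximizing sequences -/

/-- The supremum `K` is positive, and by homogeneity it is a valid constant in the inequality for
every `u ∈ ℓ^r`. -/
theorem sharp_bound {N : ℕ} {r t lam C K : ℝ} (hr : 1 < r) (ht : 1 < t) (hN : 0 < N)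
    (hC : ∀ u : ZN N → ℝ, Memlp r u → Memlp t (hlsConv lam u) ∧
      lpNorm t (hlsConv lam u) ≤ C * lpNorm r u)
    (hK : K = sSup {c : ℝ | ∃ f : ZN N → ℝ, Memlp r f ∧ lpNorm r f = 1 ∧
        c = lpNorm t (hlsConv lam f)}) :
    0 < K ∧ ∀ u : ZN N → ℝ, Memlp r u → lpNorm t (hlsConv lam u) ≤ K * lpNorm r u := by
  have hr0 : 0 < r := by linarith
  have ht0 : 0 < t := by linarith
  have h1 : ∀ u : ZN N → ℝ, Memlp r u → lpNorm r u = 1 → lpNorm t (hlsConv lam u) ≤ K := by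
    intro u hu hn
    rw [hK]
    refine le_csSup ⟨C, ?_⟩ ⟨u, hu, hn, rfl⟩
    rintro _ ⟨v, hv, hvn, rfl⟩
    have := (hC v hv).2
    rwa [hvn, mul_one] at this
  constructor
  · -- test with the point mass at the origin, whose convolution is the kernel itself
    set δ : ZN N → ℝ := Pi.single 0 1 with hδ
    have hpow : ∀ x, x ≠ 0 → |δ x| ^ r = 0 := by
      intro x hx
      rw [hδ, Pi.single_eq_of_ne hx, abs_zero, Real.zero_rpow hr0.ne']
    have hδm : Memlp r δ := summable_of_ne_finset_zero (s := {0}) fun x hx =>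
      hpow x (by simpa using hx)
    have hδn : lpNorm r δ = 1 := by
      unfold lpNorm
      rw [tsum_eq_single 0 hpow]
      simp [hδ]
    set e : ZN N := Pi.single ⟨0, hN⟩ 1 with he
    have hconv : hlsConv lam δ e = hlsKer lam e := by
      rw [hlsConv_eq, tsum_eq_single 0]
      · simp [hδ]
      · intro x hx
        rw [hδ, Pi.single_eq_of_ne hx, mul_zero]
    have hepos : 0 < hlsKer lam e := by
      have hne : e ≠ 0 := by
        intro h
        have := congrFun h ⟨0, hN⟩
        simp [he] at this
      have hd : 0 < eudist e 0 := by
        rw [norm_int_eq, norm_pos_iff]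
        intro h
        have := congrArg (fun z : EuclideanSpace ℝ (Fin N) => z ⟨0, hN⟩) h
        simp [he] at this
      unfold hlsKer
      rw [if_neg hne]
      positivity
    have := abs_le_lpNorm ht0 (hC δ hδm).1 e
    rw [hconv, abs_of_pos hepos] at this
    linarith [h1 δ hδm hδn]
  · intro u hu
    rcases (lpNorm_nonneg r u).eq_or_lt with h0 | h0
    · have := (hC u hu).2
      rw [← h0, mul_zero] at this ⊢
      exact this
    · have h2 := h1 (fun x => (lpNorm r u)⁻¹ * u x) (hu.const_mul hr0 _) (by
        rw [lpNorm_const_mul hr0, abs_of_pos (inv_pos.2 h0), inv_mul_cancel₀ h0.ne'])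
      rw [hlsConv_const_mul, lpNorm_const_mul ht0, abs_of_pos (inv_pos.2 h0),
        inv_mul_le_iff₀ h0] at h2
      linarith

/-- Non-vanishing: the inequality still holds for some exponent `r₂ > r`, so a normalized function
with small supremum norm has small `‖|i|^{-λ} ∗ u‖_t`. -/
theorem nonvanishing {N : ℕ} {r t lam K : ℝ} (hr : 1 < r) (ht : 1 < t) (hlamN : lam < (N : ℝ))
    (hN : 0 < (N : ℝ)) (hsup : 1 / r + lam / (N : ℝ) > 1 + 1 / t) (hK : 0 < K) :
    ∃ c : ℝ, 0 < c ∧ ∀ u : ZN N → ℝ, Memlp r u → lpNorm r u = 1 → (∀ x, |u x| ≤ c) →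
      lpNorm t (hlsConv lam u) ≤ K / 2 := by
  have hr0 : 0 < r := by linarith
  have hr1 : 1 / r < 1 := by rw [div_lt_one hr0]; exact hr
  have hl1 : lam / N < 1 := by rw [div_lt_one hN]; exact hlamN
  have ht' : 0 < 1 / t := by positivity
  set m : ℝ := (1 / r + (1 + 1 / t - lam / N)) / 2 with hm
  have hm0 : 0 < m := by rw [hm]; linarith
  have hmr : m < 1 / r := by linarith
  have hrq : r < 1 / m := by
    rw [lt_div_iff₀ hr0] at hmr
    rw [lt_div_iff₀ hm0]
    linarith
  have hq0 : 0 < 1 / m := by positivity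
  obtain ⟨C, hC0, hC⟩ := hls_bound (N := N) (r := 1 / m) (t := t) (lam := lam) (by linarith) ht
    hlamN hN (by rw [one_div_one_div]; linarith)
  have hθ : 0 < (1 / m - r) / (1 / m) := div_pos (by linarith) hq0
  have hc0 : 0 < (K / (2 * (C + 1))) := by positivity
  refine ⟨(K / (2 * (C + 1))) ^ (1 / ((1 / m - r) / (1 / m))), by positivity,
    fun u hu hn hb => ?_⟩
  obtain ⟨h1, h2⟩ := lpNorm_interp hr0 hrq.le (by positivity) hu hn hb
  rw [← Real.rpow_mul hc0.le, one_div_mul_cancel hθ.ne', Real.rpow_one] at h2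
  refine ((hC u h1).2.2.2).trans ((mul_le_mul_of_nonneg_left h2 hC0).trans ?_)
  rw [← mul_div_assoc, div_le_div_iff₀ (by positivity) (by positivity)]
  nlinarith

/-- A pointwise limit of unit vectors of `ℓ^r` lies in the unit ball of `ℓ^r`. -/
theorem fatou_unit {N : ℕ} {r : ℝ} (hr : 0 < r) (v : ℕ → ZN N → ℝ) (F : ZN N → ℝ)
    (hv : ∀ n, Memlp r (v n)) (hn : ∀ n, lpNorm r (v n) = 1)
    (hF : ∀ x, Tendsto (fun n => v n x) atTop (𝓝 (F x))) :
    Memlp r F ∧ lpNorm r F ^ r ≤ 1 := by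
  have hA : ∀ A : Finset (ZN N), ∑ x ∈ A, |F x| ^ r ≤ 1 := by
    intro A
    have h1 : Tendsto (fun n => ∑ x ∈ A, |v n x| ^ r) atTop (𝓝 (∑ x ∈ A, |F x| ^ r)) :=
      tendsto_finsetSum _ fun x _ => ((hF x).abs).rpow_const (Or.inr hr.le)
    refine le_of_tendsto' h1 fun n => ?_
    have h2 : ∑' x, |v n x| ^ r = 1 := by rw [← lpNorm_rpow hr, hn, Real.one_rpow]
    rw [← h2]
    exact Summable.sum_le_tsum A (fun x _ => by positivity) (hv n)
  have hm : Memlp r F := summable_of_sum_le (fun x => by positivity) hA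
  refine ⟨hm, ?_⟩
  rw [lpNorm_rpow hr]
  exact Summable.tsum_le_of_sum_le hm hA

/-- Pointwise convergent maximizing sequences with non-zero limit `F` converge in norm. With
`a = ‖F‖_r^r`, the Brezis–Lieb lemma in `ℓ^r` and in `ℓ^t` gives `1 ≤ a^{t/r} + (1-a)^{t/r}`, and
`t > r` then forces `a = 1`. -/
theorem strong_convergence {N : ℕ} {r t lam C K : ℝ} (hr : 1 < r) (ht : 1 < t) (hrt : r < t)
    (hN : (N : ℝ) < lam * Real.conjExponent r)
    (hsum : ∀ u : ZN N → ℝ, Memlp r u → ∀ i, Summable fun j => hlsKer lam (i - j) * |u j|)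
    (hC : ∀ u : ZN N → ℝ, Memlp r u → Memlp t (hlsConv lam u) ∧
      lpNorm t (hlsConv lam u) ≤ C * lpNorm r u) (hC0 : 0 ≤ C)
    (hK0 : 0 < K)
    (hK : ∀ u : ZN N → ℝ, Memlp r u → lpNorm t (hlsConv lam u) ≤ K * lpNorm r u)
    (v : ℕ → ZN N → ℝ) (F : ZN N → ℝ) (hv : ∀ n, Memlp r (v n)) (hn : ∀ n, lpNorm r (v n) = 1)
    (hF : ∀ x, Tendsto (fun n => v n x) atTop (𝓝 (F x))) (hF0 : ∃ x, F x ≠ 0)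
    (hmax : Tendsto (fun n => lpNorm t (hlsConv lam (v n))) atTop (𝓝 K)) :
    Memlp r F ∧ lpNorm r F = 1 ∧ lpNorm t (hlsConv lam F) = K ∧
      Tendsto (fun n => lpNorm r (fun x => v n x - F x)) atTop (𝓝 0) := by
  have hr0 : 0 < r := by linarith
  have ht0 : 0 < t := by linarith
  obtain ⟨hFm, ha1⟩ := fatou_unit hr0 v F hv hn hF
  set a := lpNorm r F ^ r with ha
  have hFpos : 0 < lpNorm r F := by
    obtain ⟨x, hx⟩ := hF0
    exact (abs_pos.2 hx).trans_le (abs_le_lpNorm hr0 hFm x)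
  have ha0 : 0 < a := by positivity
  set h : ℕ → ZN N → ℝ := fun n x => v n x - F x with hh
  have hhm : ∀ n, Memlp r (h n) := fun n => (hv n).sub hr0 hFm
  have hhb : ∀ n, lpNorm r (h n) ≤ 1 + lpNorm r F := fun n => by
    have := lpNorm_sub_le hr.le (hv n) hFm
    rwa [hn] at this
  have hh0 : ∀ x, Tendsto (fun n => h n x) atTop (𝓝 0) := fun x => by
    have := (hF x).sub_const (F x)
    rwa [sub_self] at this
  -- the remainders carry the mass `1 - a`
  have hmass : Tendsto (fun n => lpNorm r (h n) ^ r) atTop (𝓝 (1 - a)) := by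
    have := (brezis_lieb_s2 hr.le h F hhm hFm _ hhb hh0).const_sub 1
    refine this.congr fun n => ?_
    have e : (fun x => h n x + F x) = v n := by ext x; simp [hh]
    rw [e, hn, Real.one_rpow]
    ring
  have hTh0 : ∀ i, Tendsto (fun n => hlsConv lam (h n) i) atTop (𝓝 0) := by
    intro i
    have hpq : (Real.conjExponent r).HolderConjugate r :=
      (Real.HolderConjugate.conjExponent hr).symm
    have hw : Memlp (Real.conjExponent r) (fun j => hlsKer lam (i - j)) := by
      have h1 := (Equiv.subLeft i).summable_iff.2 (summable_ker_rpow hpq.pos hN)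
      refine h1.congr fun j => ?_
      simp only [Function.comp, Equiv.subLeft_apply, abs_of_nonneg (ker_nonneg _ _)]
    have := tendsto_pairing hpq hw h hhm _ hhb hh0
    simpa only [hlsConv_eq] using this
  have hTmass : Tendsto (fun n => lpNorm t (hlsConv lam (h n)) ^ t) atTop
      (𝓝 (K ^ t - lpNorm t (hlsConv lam F) ^ t)) := by
    have h1 := brezis_lieb_s2 ht.le (fun n => hlsConv lam (h n)) (hlsConv lam F)
      (fun n => (hC _ (hhm n)).1) (hC _ hFm).1 (C * (1 + lpNorm r F))
      (fun n => ((hC _ (hhm n)).2).trans (mul_le_mul_of_nonneg_left (hhb n) hC0)) hTh0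
    have h2 := (hmax.rpow_const (p := t) (Or.inr ht0.le)).sub h1
    refine h2.congr fun n => ?_
    have e : (fun x => hlsConv lam (h n) x + hlsConv lam F x) = hlsConv lam (v n) := by
      ext x
      rw [hh, hlsConv_sub (hsum _ (hv n) x) (hsum _ hFm x)]
      ring
    rw [e]
    ring
  have hτ : 1 < t / r := by rw [lt_div_iff₀ hr0]; linarith
  have hpow : ∀ u : ZN N → ℝ, Memlp r u →
      lpNorm t (hlsConv lam u) ^ t ≤ K ^ t * (lpNorm r u ^ r) ^ (t / r) := by
    intro u hu
    refine (Real.rpow_le_rpow (lpNorm_nonneg _ _) (hK u hu) ht0.le).trans (le_of_eq ?_)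
    rw [Real.mul_rpow hK0.le (lpNorm_nonneg _ _), ← Real.rpow_mul (lpNorm_nonneg _ _),
      mul_div_cancel₀ _ hr0.ne']
  have hlim : K ^ t - lpNorm t (hlsConv lam F) ^ t ≤ K ^ t * (1 - a) ^ (t / r) :=
    le_of_tendsto_of_tendsto' hTmass
      ((hmass.rpow_const (Or.inr (by positivity))).const_mul _) fun n => hpow _ (hhm n)
  have hFt := hpow F hFm
  rw [← ha] at hFt
  have hKt : 0 < K ^ t := by positivity
  have ha_eq : a = 1 := by
    by_contra hne
    have hlt : a < 1 := lt_of_le_of_ne ha1 hne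
    have h1 := Real.rpow_lt_rpow_of_exponent_gt ha0 hlt hτ
    have h2 := Real.rpow_lt_rpow_of_exponent_gt (by linarith : 0 < 1 - a) (by linarith) hτ
    rw [Real.rpow_one] at h1 h2
    nlinarith
  have hFn : lpNorm r F = 1 := by
    have h1 : lpNorm r F ^ r = 1 ^ r := by rw [← ha, ha_eq, Real.one_rpow]
    exact (Real.rpow_left_inj (lpNorm_nonneg _ _) zero_le_one hr0.ne').1 h1
  refine ⟨hFm, hFn, le_antisymm ?_ ?_, ?_⟩
  · simpa [hFn] using hK F hFm
  · rw [ha_eq, sub_self, Real.zero_rpow (by linarith), mul_zero, sub_nonpos] at hlim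
    exact (Real.rpow_le_rpow_iff hK0.le (lpNorm_nonneg _ _) ht0).1 hlim
  · rw [ha_eq, sub_self] at hmass
    have h1 := hmass.rpow_const (p := 1 / r) (Or.inr (by positivity))
    rw [Real.zero_rpow (by positivity)] at h1
    refine h1.congr fun n => ?_
    rw [← Real.rpow_mul (lpNorm_nonneg _ _), mul_one_div_cancel hr0.ne', Real.rpow_one]

/-! ### Existence of extremal pairs -/

/-- existence of extremal pairs for the supercritical discrete
Hardy–Littlewood–Sobolev inequality on `ℤ^N`. -/
theorem stmt2 (N : ℕ) (r s t lam : ℝ) (hr : 1 < r) (hs : 1 < s) (ht : 1 < t)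
    (hlam0 : 0 < lam) (hlamN : lam < (N : ℝ))
    (hts : 1 / t + 1 / s = 1) (hsup : 1 / r + lam / (N : ℝ) > 1 + 1 / t)
    (K : ℝ)
    (hK : K = sSup {c : ℝ | ∃ f : ZN N → ℝ, Memlp r f ∧ lpNorm r f = 1 ∧
        c = lpNorm t (hlsConv lam f)})
    (f : ℕ → ZN N → ℝ)
    (hmem : ∀ n, Memlp r (f n)) (hnorm : ∀ n, lpNorm r (f n) = 1)
    (hmax : Tendsto (fun n => lpNorm t (hlsConv lam (f n))) atTop (𝓝 K)) :
    ∃ (i : ℕ → ZN N) (φ : ℕ → ℕ), StrictMono φ ∧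
      ∃ F : ZN N → ℝ, Memlp r F ∧ lpNorm r F = 1 ∧ lpNorm t (hlsConv lam F) = K ∧
        Tendsto (fun k => lpNorm r (fun x => f (φ k) (x + i (φ k)) - F x)) atTop (𝓝 0) ∧
        ∃ g : ZN N → ℝ, Memlp s g ∧ lpNorm s g = 1 ∧ hlsSum lam F g = K ∧
          K = sSup {c : ℝ | ∃ F' g' : ZN N → ℝ, Memlp r F' ∧ Memlp s g' ∧
              lpNorm r F' = 1 ∧ lpNorm s g' = 1 ∧ c = hlsSum lam F' g'} := by
  have hN : 0 < (N : ℝ) := by linarith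
  have hr0 : 0 < r := by linarith
  have ht0 : 0 < t := by linarith
  have hl1 : lam / N < 1 := by rw [div_lt_one hN]; exact hlamN
  have ht' : 0 < 1 / t := by positivity
  have hrt : r < t := (one_div_lt_one_div ht0 hr0).1 (by linarith)
  have hpq := Real.HolderConjugate.conjExponent hr
  have hconj : (N : ℝ) < lam * Real.conjExponent r := by
    have h1 := hpq.inv_add_inv_eq_one
    have h2 : (Real.conjExponent r)⁻¹ < lam / N := by rw [one_div] at hsup; linarith
    rw [lt_div_iff₀ hN, inv_mul_lt_iff₀ hpq.symm.pos] at h2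
    linarith
  obtain ⟨C, hC0, hC⟩ := hls_bound hr ht hlamN hN hsup
  have hC' : ∀ u : ZN N → ℝ, Memlp r u → Memlp t (hlsConv lam u) ∧
      lpNorm t (hlsConv lam u) ≤ C * lpNorm r u := fun u hu => ⟨(hC u hu).2.1, (hC u hu).2.2.2⟩
  obtain ⟨hK0, hKb⟩ := sharp_bound hr ht (by exact_mod_cast hN) hC' hK
  obtain ⟨c, hc, hnv⟩ := nonvanishing hr ht hlamN hN hsup hK0
  -- translate so that a value of size at least `c`, when there is one, sits at the origin
  have hchoice : ∀ n, ∃ x, (∃ y, c ≤ |f n y|) → c ≤ |f n x| := by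
    intro n
    by_cases h : ∃ y, c ≤ |f n y|
    · exact ⟨h.choose, fun _ => h.choose_spec⟩
    · exact ⟨0, fun h' => absurd h' h⟩
  choose i hi using hchoice
  have hev : ∀ᶠ n in atTop, c ≤ |f n (i n)| := by
    filter_upwards [hmax.eventually (lt_mem_nhds (by linarith : K / 2 < K))] with n hn
    refine hi n ?_
    by_contra! hcon
    linarith [hnv (f n) (hmem n) (hnorm n) fun x => (hcon x).le]
  have hbox : IsCompact (Set.univ.pi fun _ : ZN N => Set.Icc (-1 : ℝ) 1) :=
    isCompact_univ_pi fun _ => isCompact_Icc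
  obtain ⟨F, -, φ, hφ, hlim⟩ := hbox.tendsto_subseq (x := fun n x => f n (x + i n)) (by
    intro n x _
    have := abs_le_lpNorm hr0 (hmem n) (x + i n)
    rw [hnorm] at this
    exact abs_le.1 this)
  rw [tendsto_pi_nhds] at hlim
  have hF0 : F 0 ≠ 0 := by
    have h1 : c ≤ |F 0| := by
      refine ge_of_tendsto (hlim 0).abs ((hφ.tendsto_atTop.eventually hev).mono fun n hn => ?_)
      simpa using hn
    exact abs_pos.1 (hc.trans_le h1)
  obtain ⟨hFm, hFn, hFK, hconv⟩ := strong_convergence hr ht hrt hconj (fun u hu => (hC u hu).1) hC'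
    hC0 hK0 hKb (fun k x => f (φ k) (x + i (φ k))) F (fun k => (hmem _).translate _)
    (fun k => by rw [lpNorm_translate, hnorm]) hlim ⟨0, hF0⟩ (by
      refine (hmax.comp hφ.tendsto_atTop).congr fun k => ?_
      simp only [Function.comp]
      rw [← lpNorm_translate t (hlsConv lam (f (φ k))) (i (φ k))]
      congr 1
      ext x
      exact (hlsConv_translate lam (f (φ k)) (i (φ k)) x).symm)
  have htsc : t.HolderConjugate s :=
    Real.holderConjugate_iff.2 ⟨ht, by simpa only [one_div] using hts⟩
  obtain ⟨g, hgm, hgn, hgK⟩ := exists_dual htsc hK0 (hC' F hFm).1 hFK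
  have hsumeq : ∀ u : ZN N → ℝ, Memlp r u → ∀ w : ZN N → ℝ, Memlp s w →
      hlsSum lam u w = ∑' j, w j * hlsConv lam u j := fun u hu w hw =>
    hlsSum_eq htsc.symm (hC u hu).1 (hC u hu).2.2.1 hw
  have hval : hlsSum lam F g = K := by rw [hsumeq F hFm g hgm, hgK]
  refine ⟨i, φ, hφ, F, hFm, hFn, hFK, hconv, g, hgm, hgn, hval, ?_⟩
  symm
  apply IsGreatest.csSup_eq
  refine ⟨⟨F, g, hFm, hgm, hFn, hgn, hval.symm⟩, ?_⟩
  rintro _ ⟨u, w, hu, hw, hun, hwn, rfl⟩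
  rw [hsumeq u hu w hw]
  have h1 := (abs_tsum_mul_le htsc.symm hw (hC' u hu).1).2
  have h2 := hKb u hu
  rw [hun, mul_one] at h2
  rw [hwn, one_mul] at h1
  exact (le_abs_self _).trans (h1.trans h2)
end
end

section
/- Let N ≥ 3 and 2 < q ≤ (2 + 2N)/N. If u : ℤ^N → ℝ satisfies u(x) ≥ 0 for all x and Δ₂u(x) + u(x)^{q−1} = 0 for all x ∈ ℤ^N, then u ≡ 0; i.e. the equation Δ₂u + u^{q−1} = 0 has no non-trivial non-negative solution on ℤ^N. -/
/-!
Write `σ = q - 1 > 1`. The proof is the test function method, with the first Dirichlet eigenfunction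
of a large box as test function. On the box of radius `R` centred at `c`, put
`Φ x = ∏ i, cos (θ (x i - c i))` with `θ = π / (2R)`, extended by `0`. Then `Φ ≥ 0`, `Φ c = 1`,
and `-ΔΦ ≤ λ Φ` on the whole lattice with `λ = N θ²`: inside the box this is the cosine addition
formula, and where `Φ` vanishes its Laplacian is nonnegative (`cosBump_step`, `boxBump_lap`).
Summation by parts (`sum_lap_mul`) gives `∑ u^σ Φ = -∑ u ΔΦ ≤ λ ∑ u Φ`, and Young's inequality
`λ u ≤ u^σ / σ + λ^σ' / σ'` with `σ' = σ / (σ - 1)` absorbs the right-hand side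
(`test_function_bound`):
`u(c)^σ ≤ ∑ u^σ Φ ≤ λ^σ' ∑ Φ ≤ C R^(-2σ') R^N`.
The hypothesis on `q` says `σ ≤ 1 + 2 / N`, that is `2σ' ≥ N + 2`, so the right-hand side is
`O(R⁻²)`, and `u(c) = 0`.
-/


open Filter Topology

noncomputable section

/-- The graph Laplacian `Δ₂u(x) = Σ_{y∼x} (u(y) - u(x))` on `ℤ^N`. -/
def lap2 {N : ℕ} (u : ZN N → ℝ) (x : ZN N) : ℝ :=
  ∑' y : {y : ZN N // adj x y}, (u y.1 - u x)

/-! ### The Laplacian and summation by parts -/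

/-- The `2N` neighbours of `x`, parametrised by a direction and a sign. -/
def nbr {N : ℕ} (x : ZN N) (p : Fin N × Bool) : {y : ZN N // adj x y} :=
  ⟨x + Pi.single p.1 (if p.2 then 1 else -1), by
    unfold adj
    rw [Finset.sum_eq_single p.1]
    · rcases p with ⟨i, b⟩
      cases b <;> simp
    · intro k _ hk
      simp [Pi.single_eq_of_ne hk]
    · simp⟩

lemma nbr_bijective {N : ℕ} (x : ZN N) : Function.Bijective (nbr x) := by
  constructor
  · rintro ⟨i, b⟩ ⟨j, c⟩ h
    have h1 : (Pi.single i (if b then 1 else -1) : ZN N) = Pi.single j (if c then 1 else -1) := by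
      have := congrArg Subtype.val h
      simpa [nbr] using this
    have hij : i = j := by
      by_contra hne
      have := congrFun h1 i
      rw [Pi.single_eq_same, Pi.single_eq_of_ne hne] at this
      cases b <;> simp at this
    subst hij
    have := congrFun h1 i
    cases b <;> cases c <;> simp at this ⊢
  · rintro ⟨y, hy⟩
    unfold adj at hy
    obtain ⟨i, hi⟩ : ∃ i, x i - y i ≠ 0 := by
      by_contra! h
      simp [h] at hy
    rw [← Finset.add_sum_erase _ _ (Finset.mem_univ i)] at hy
    have hnn : 0 ≤ ∑ k ∈ Finset.univ.erase i, |x k - y k| :=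
      Finset.sum_nonneg fun _ _ => abs_nonneg _
    have h1 : 1 ≤ |x i - y i| := Int.one_le_abs hi
    have h0 : ∑ k ∈ Finset.univ.erase i, |x k - y k| = 0 := by omega
    rw [Finset.sum_eq_zero_iff_of_nonneg fun _ _ => abs_nonneg _] at h0
    have hk : ∀ k, k ≠ i → y k = x k := by
      intro k hk
      have := h0 k (by simp [hk])
      rw [abs_eq_zero] at this
      omega
    have h2 : |x i - y i| = 1 := by omega
    refine ⟨(i, decide (y i = x i + 1)), Subtype.ext (funext fun k => ?_)⟩
    by_cases hki : k = i
    · subst hki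
      rcases (abs_eq (by norm_num)).1 h2 with h | h
      · have : ¬ (y k = x k + 1) := by omega
        simp [nbr, this]; omega
      · have : y k = x k + 1 := by omega
        simp [nbr, this]
    · simp [nbr, Pi.single_eq_of_ne hki, hk k hki]

/-- The Laplacian as a sum of second differences in the coordinate directions. -/
lemma lap2_eq {N : ℕ} (u : ZN N → ℝ) (x : ZN N) :
    lap2 u x = ∑ i, (u (x + Pi.single i 1) + u (x - Pi.single i 1) - 2 * u x) := by
  unfold lap2
  rw [← (Equiv.ofBijective _ (nbr_bijective x)).tsum_eq, tsum_fintype, Fintype.sum_prod_type]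
  refine Finset.sum_congr rfl fun i _ => ?_
  rw [Fintype.sum_bool]
  simp only [Equiv.ofBijective_apply, nbr, if_true, Bool.false_eq_true, if_false, Pi.single_neg,
    ← sub_eq_add_neg]
  ring

lemma summable_mul_of_finite {ι : Type*} {φ : ι → ℝ} (hφ : φ.support.Finite) (f : ι → ℝ) :
    Summable fun x => f x * φ x :=
  summable_of_hasFiniteSupport (hφ.subset fun x hx => by
    simp only [Function.mem_support] at hx ⊢
    exact right_ne_zero_of_mul hx)

lemma finite_support_shift {N : ℕ} {φ : ZN N → ℝ} (hφ : φ.support.Finite) (e : ZN N) :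
    (fun x => φ (x + e)).support.Finite :=
  (hφ.preimage (add_left_injective e).injOn).subset fun _ hx => hx

/-- Summation by parts against a finitely supported function. -/
lemma sum_lap_mul {N : ℕ} {φ : ZN N → ℝ} (hφ : φ.support.Finite) (u : ZN N → ℝ) :
    ∑' x, lap2 u x * φ x = ∑' x, u x * lap2 φ x := by
  have hs : ∀ (f : ZN N → ℝ) (e : ZN N), Summable fun x => f x * φ (x + e) := fun f e =>
    summable_mul_of_finite (finite_support_shift hφ e) f
  have hs0 : ∀ f : ZN N → ℝ, Summable fun x => f x * φ x := summable_mul_of_finite hφ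
  have hshift : ∀ e : ZN N, ∑' x, u (x + e) * φ x = ∑' x, u x * φ (x - e) := by
    intro e
    rw [← (Equiv.addRight e).tsum_eq fun x => u x * φ (x - e)]
    simp
  have hL : ∀ i : Fin N, Summable fun x =>
      (u (x + Pi.single i 1) + u (x - Pi.single i 1) - 2 * u x) * φ x := fun i => hs0 _
  have hR : ∀ i : Fin N, Summable fun x =>
      u x * (φ (x + Pi.single i 1) + φ (x - Pi.single i 1) - 2 * φ x) := by
    intro i
    have := ((hs u (Pi.single i 1)).add (hs u (-Pi.single i 1))).sub ((hs0 u).mul_left 2)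
    refine this.congr fun x => ?_
    rw [← sub_eq_add_neg]
    ring
  simp only [lap2_eq, Finset.sum_mul, Finset.mul_sum]
  rw [Summable.tsum_finsetSum fun i _ => hL i, Summable.tsum_finsetSum fun i _ => hR i]
  refine Finset.sum_congr rfl fun i _ => ?_
  set e : ZN N := Pi.single i 1
  have hsm : Summable fun x => u x * φ (x - e) := by
    simpa [sub_eq_add_neg] using hs u (-e)
  have h1 : ∑' x, (u (x + e) + u (x - e) - 2 * u x) * φ x
      = ∑' x, u (x + e) * φ x + ∑' x, u (x - e) * φ x - 2 * ∑' x, u x * φ x := by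
    rw [← tsum_mul_left, ← (hs0 fun x => u (x + e)).tsum_add (hs0 fun x => u (x - e)),
      ← Summable.tsum_sub ((hs0 fun x => u (x + e)).add (hs0 fun x => u (x - e)))
        ((hs0 u).mul_left 2)]
    exact tsum_congr fun x => by ring
  have h2 : ∑' x, u x * (φ (x + e) + φ (x - e) - 2 * φ x)
      = ∑' x, u x * φ (x + e) + ∑' x, u x * φ (x - e) - 2 * ∑' x, u x * φ x := by
    rw [← tsum_mul_left, ← (hs u e).tsum_add hsm,
      ← Summable.tsum_sub ((hs u e).add hsm) ((hs0 u).mul_left 2)]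
    exact tsum_congr fun x => by ring
  have h3 := hshift (-e)
  simp only [← sub_eq_add_neg, sub_neg_eq_add] at h3
  rw [h1, h2, hshift e, h3]
  ring

/-! ### The test function estimate -/

/-- The test function estimate: the bound `-Δφ ≤ l φ` turns the equation
`Δu + u^s = 0` into `∑ u^s φ ≤ l^s' ∑ φ`, with `s'` the conjugate exponent of `s`. -/
lemma test_function_bound {N : ℕ} {φ u : ZN N → ℝ} (hφ : φ.support.Finite) (hφ0 : ∀ x, 0 ≤ φ x)
    {l s s' : ℝ} (hl : 0 ≤ l) (hs : s.HolderConjugate s') (hlap : ∀ x, -l * φ x ≤ lap2 φ x)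
    (hu : ∀ x, 0 ≤ u x) (heq : ∀ x, lap2 u x + u x ^ s = 0) :
    ∑' x, u x ^ s * φ x ≤ l ^ s' * ∑' x, φ x := by
  have hs0 : ∀ f : ZN N → ℝ, Summable fun x => f x * φ x := summable_mul_of_finite hφ
  have hφs : Summable φ := summable_of_hasFiniteSupport hφ
  have hlapfin : Summable fun x => u x * lap2 φ x := by
    have hfin : ∀ e : ZN N, Summable fun x => u x * φ (x + e) := fun e =>
      summable_mul_of_finite (finite_support_shift hφ e) u
    have : Summable fun x => ∑ i : Fin N, (u x * φ (x + Pi.single i 1)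
        + u x * φ (x + -Pi.single i 1) - 2 * (u x * φ x)) :=
      summable_sum fun i _ => ((hfin _).add (hfin _)).sub ((hs0 u).mul_left 2)
    refine this.congr fun x => ?_
    rw [lap2_eq, Finset.mul_sum]
    refine Finset.sum_congr rfl fun i _ => ?_
    rw [← sub_eq_add_neg]
    ring
  have h1 : ∑' x, u x ^ s * φ x = -∑' x, u x * lap2 φ x := by
    rw [← sum_lap_mul hφ u, ← tsum_neg]
    refine tsum_congr fun x => ?_
    rw [show u x ^ s = -lap2 u x by linarith [heq x]]
    ring
  have h2 : ∑' x, u x ^ s * φ x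
      ≤ ∑' x, (s⁻¹ * (u x ^ s * φ x) + l ^ s' * s'⁻¹ * φ x) := by
    rw [h1, ← tsum_neg]
    refine Summable.tsum_le_tsum (fun x => ?_) hlapfin.neg
      (((hs0 fun x => u x ^ s).mul_left _).add (hφs.mul_left _))
    have hy := Real.young_inequality_of_nonneg (hu x) hl hs
    have ha := mul_le_mul_of_nonneg_left (hlap x) (hu x)
    have hb := mul_le_mul_of_nonneg_right hy (hφ0 x)
    simp only [div_eq_mul_inv] at hb
    linarith
  rw [Summable.tsum_add ((hs0 fun x => u x ^ s).mul_left _) (hφs.mul_left _), tsum_mul_left,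
    tsum_mul_left] at h2
  have hinv : s⁻¹ = 1 - s'⁻¹ := by linarith [hs.inv_add_inv_eq_one]
  rw [hinv] at h2
  have hpos : 0 < s'⁻¹ := inv_pos.2 hs.symm.pos
  refine le_of_mul_le_mul_left ?_ hpos
  linarith

/-! ### The cosine test function -/

/-- The first Dirichlet eigenfunction of the discrete interval `[-R, R]`, extended by `0`
(for `R ≥ 1`); it vanishes at the endpoints `±R`. -/
def cosBump (R : ℕ) (k : ℤ) : ℝ := if |k| ≤ R then Real.cos (Real.pi / (2 * R) * k) else 0

lemma cosBump_nonneg {R : ℕ} (hR : 1 ≤ R) (k : ℤ) : 0 ≤ cosBump R k := by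
  unfold cosBump
  split_ifs with h
  · have hR' : (0 : ℝ) < R := by exact_mod_cast hR
    have hk : |(k : ℝ)| ≤ R := by exact_mod_cast h
    apply Real.cos_nonneg_of_mem_Icc
    have h1 : |Real.pi / (2 * R) * k| ≤ Real.pi / 2 := by
      rw [abs_mul, abs_of_nonneg (by positivity)]
      calc Real.pi / (2 * R) * |(k : ℝ)| ≤ Real.pi / (2 * R) * R := by gcongr
        _ = Real.pi / 2 := by field_simp
    have := abs_le.1 h1
    exact ⟨by linarith, this.2⟩
  · exact le_rfl

lemma cosBump_le_one (R : ℕ) (k : ℤ) : cosBump R k ≤ 1 := by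
  unfold cosBump
  split_ifs
  · exact Real.cos_le_one _
  · norm_num

lemma cosBump_zero (R : ℕ) : cosBump R 0 = 1 := by simp [cosBump]

/-- Second differences of `cosBump` are bounded below as for an eigenfunction, also at and beyond
the endpoints. -/
lemma cosBump_step {R : ℕ} (hR : 1 ≤ R) (k : ℤ) :
    2 * Real.cos (Real.pi / (2 * R)) * cosBump R k ≤ cosBump R (k + 1) + cosBump R (k - 1) := by
  by_cases h : |k| < R
  · have h1 : |k + 1| ≤ R := by rw [abs_lt] at h; rw [abs_le]; omega
    have h2 : |k - 1| ≤ R := by rw [abs_lt] at h; rw [abs_le]; omega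
    rw [cosBump, cosBump, cosBump, if_pos h.le, if_pos h1, if_pos h2]
    push_cast
    rw [mul_add, mul_sub, Real.cos_add, Real.cos_sub, mul_one]
    exact le_of_eq (by ring)
  · have h0 : cosBump R k = 0 := by
      unfold cosBump
      split_ifs with h'
      · have hR0 : (0 : ℝ) < R := by exact_mod_cast hR
        -- only the two endpoints remain, where the cosine vanishes
        have hk : |k| = R := le_antisymm h' (not_lt.1 h)
        have hk' : |(k : ℝ)| = R := by exact_mod_cast hk
        rw [← Real.cos_abs, abs_mul, hk', abs_of_nonneg (by positivity),
          show Real.pi / (2 * R) * (R : ℝ) = Real.pi / 2 by field_simp, Real.cos_pi_div_two]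
      · rfl
    rw [h0, mul_zero]
    exact add_nonneg (cosBump_nonneg hR _) (cosBump_nonneg hR _)

/-- The first Dirichlet eigenfunction of the box of radius `R` centred at `c`, extended by `0`. -/
def boxBump {N : ℕ} (R : ℕ) (c x : ZN N) : ℝ := ∏ i, cosBump R (x i - c i)

/-- The box of radius `R` centred at `c`. -/
def box {N : ℕ} (R : ℕ) (c : ZN N) : Finset (ZN N) :=
  Fintype.piFinset fun i => Finset.Icc (c i - R) (c i + R)

lemma boxBump_nonneg {N R : ℕ} (hR : 1 ≤ R) (c x : ZN N) : 0 ≤ boxBump R c x :=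
  Finset.prod_nonneg fun _ _ => cosBump_nonneg hR _

lemma boxBump_eq_zero {N R : ℕ} {c x : ZN N} (hx : x ∉ box R c) : boxBump R c x = 0 := by
  simp only [box, Fintype.mem_piFinset, not_forall, Finset.mem_Icc] at hx
  obtain ⟨i, hi⟩ := hx
  refine Finset.prod_eq_zero (Finset.mem_univ i) (if_neg ?_)
  rw [abs_le]
  omega

lemma boxBump_support {N : ℕ} (R : ℕ) (c : ZN N) : (boxBump R c).support.Finite :=
  (box R c).finite_toSet.subset fun _ hx => by
    by_contra h
    exact hx (boxBump_eq_zero h)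

lemma tsum_boxBump_le {N R : ℕ} (hR : 1 ≤ R) (c : ZN N) :
    ∑' x, boxBump R c x ≤ (3 * R : ℝ) ^ N := by
  rw [tsum_eq_sum fun x hx => boxBump_eq_zero hx]
  have hcard : (box R c).card = (2 * R + 1) ^ N := by
    simp only [box, Fintype.card_piFinset, Int.card_Icc]
    rw [Finset.prod_congr rfl fun i _ =>
      show (c i + (R : ℤ) + 1 - (c i - R)).toNat = 2 * R + 1 by omega]
    simp
  calc ∑ x ∈ box R c, boxBump R c x ≤ ∑ x ∈ box R c, (1 : ℝ) := by
        refine Finset.sum_le_sum fun x _ => ?_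
        exact Finset.prod_le_one (fun _ _ => cosBump_nonneg hR _) fun _ _ => cosBump_le_one _ _
    _ = ((2 * R + 1 : ℕ) : ℝ) ^ N := by simp [hcard]
    _ ≤ (3 * R : ℝ) ^ N := by
        have : (2 * R + 1 : ℕ) ≤ 3 * R := by omega
        gcongr
        exact_mod_cast this

/-- `boxBump` satisfies `-ΔΦ ≤ N θ² Φ` on the whole lattice: each coordinate contributes
`2 (1 - cos θ) ≤ θ²`. -/
lemma boxBump_lap {N R : ℕ} (hR : 1 ≤ R) (c x : ZN N) :
    -(N * (Real.pi / (2 * R)) ^ 2) * boxBump R c x ≤ lap2 (boxBump R c) x := by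
  set θ := Real.pi / (2 * R) with hθ
  have hterm : ∀ i : Fin N, -θ ^ 2 * boxBump R c x ≤ boxBump R c (x + Pi.single i 1)
      + boxBump R c (x - Pi.single i 1) - 2 * boxBump R c x := by
    intro i
    set P := ∏ j ∈ Finset.univ.erase i, cosBump R (x j - c j) with hP
    have hP0 : 0 ≤ P := Finset.prod_nonneg fun _ _ => cosBump_nonneg hR _
    have hx : boxBump R c x = cosBump R (x i - c i) * P :=
      (Finset.mul_prod_erase _ _ (Finset.mem_univ i)).symm
    have hxp : boxBump R c (x + Pi.single i 1) = cosBump R (x i - c i + 1) * P := by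
      rw [boxBump, ← Finset.mul_prod_erase _ _ (Finset.mem_univ i)]
      congr 1
      · simp only [Pi.add_apply, Pi.single_eq_same]
        congr 1; ring
      · refine Finset.prod_congr rfl fun j hj => ?_
        simp [Pi.single_eq_of_ne (Finset.ne_of_mem_erase hj)]
    have hxm : boxBump R c (x - Pi.single i 1) = cosBump R (x i - c i - 1) * P := by
      rw [boxBump, ← Finset.mul_prod_erase _ _ (Finset.mem_univ i)]
      congr 1
      · simp only [Pi.sub_apply, Pi.single_eq_same]
        congr 1; ring
      · refine Finset.prod_congr rfl fun j hj => ?_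
        simp [Pi.single_eq_of_ne (Finset.ne_of_mem_erase hj)]
    have h1 := mul_le_mul_of_nonneg_right (cosBump_step hR (x i - c i)) hP0
    have h2 := mul_le_mul_of_nonneg_right (Real.one_sub_sq_div_two_le_cos (x := θ))
      (boxBump_nonneg hR c x)
    rw [← hθ] at h1
    rw [hxp, hxm]
    rw [hx] at h2 ⊢
    linarith
  rw [lap2_eq]
  calc -(N * θ ^ 2) * boxBump R c x = ∑ _i : Fin N, -θ ^ 2 * boxBump R c x := by
        simp only [Finset.sum_const, Finset.card_univ, Fintype.card_fin, nsmul_eq_mul]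
        ring
    _ ≤ _ := Finset.sum_le_sum fun i _ => hterm i

/-! ### Nonexistence -/

/-- nonexistence of non-trivial non-negative solutions of
`Δ₂u + u^{q-1} = 0` on `ℤ^N` for `2 < q ≤ (2+2N)/N`. -/
theorem stmt3 (N : ℕ) (hN : 3 ≤ N) (q : ℝ) (hq1 : 2 < q)
    (hq2 : q ≤ (2 + 2 * (N : ℝ)) / (N : ℝ))
    (u : ZN N → ℝ) (hnn : ∀ x, 0 ≤ u x)
    (heq : ∀ x, lap2 u x + u x ^ (q - 1) = 0) :
    ∀ x, u x = 0 := by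
  intro c
  have hN0 : (0 : ℝ) < N := by
    have : 0 < N := by omega
    exact_mod_cast this
  set s := q - 1 with hs_def
  have hs1 : 1 < s := by linarith
  have hs : s.HolderConjugate s.conjExponent := Real.HolderConjugate.conjExponent hs1
  set s' := s.conjExponent with hconj_def
  -- the bound on `q` enters only here
  have hs' : 1 + (N : ℝ) / 2 ≤ s' := by
    have h1 : (s - 1) * N ≤ 2 := by
      rw [le_div_iff₀ hN0] at hq2
      rw [hs_def]
      linarith
    rw [hconj_def, Real.conjExponent, le_div_iff₀ (by linarith)]
    linarith
  set A : ℝ := N * (Real.pi / 2) ^ 2 with hA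
  have hA0 : 0 ≤ A := by positivity
  have key : ∀ R : ℕ, 1 ≤ R → u c ^ s * R ≤ A ^ s' * 3 ^ N := by
    intro R hR
    have hR1 : (1 : ℝ) ≤ R := by exact_mod_cast hR
    have hR0 : (0 : ℝ) < R := by linarith
    have h1 := test_function_bound (boxBump_support R c) (boxBump_nonneg hR c)
      (by positivity) hs (boxBump_lap hR c) hnn heq
    have h2 : u c ^ s ≤ ∑' x, u x ^ s * boxBump R c x := by
      have := (summable_mul_of_finite (boxBump_support R c) fun x => u x ^ s).le_tsum c
        fun x _ => mul_nonneg (Real.rpow_nonneg (hnn x) s) (boxBump_nonneg hR c x)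
      simpa [boxBump, cosBump_zero] using this
    have h3 : ((N : ℝ) * (Real.pi / (2 * R)) ^ 2) ^ s' ≤ A ^ s' * ((R : ℝ) ^ (2 + N))⁻¹ := by
      have e : (N : ℝ) * (Real.pi / (2 * R)) ^ 2 = A * ((R : ℝ) ^ 2)⁻¹ := by
        rw [hA]
        field_simp
      rw [e, Real.mul_rpow hA0 (by positivity), Real.inv_rpow (by positivity)]
      gcongr
      rw [← Real.rpow_natCast (R : ℝ) 2, ← Real.rpow_mul hR0.le, ← Real.rpow_natCast]
      apply Real.rpow_le_rpow_of_exponent_le hR1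
      push_cast
      linarith
    have h4 : u c ^ s ≤ A ^ s' * ((R : ℝ) ^ (2 + N))⁻¹ * (3 * R) ^ N :=
      (h2.trans h1).trans (mul_le_mul h3 (tsum_boxBump_le hR c)
        (tsum_nonneg fun x => boxBump_nonneg hR c x) (by positivity))
    have h5 : A ^ s' * ((R : ℝ) ^ (2 + N))⁻¹ * (3 * R) ^ N = A ^ s' * 3 ^ N / R ^ 2 := by
      rw [mul_pow, pow_add]
      field_simp
    rw [h5, le_div_iff₀ (by positivity)] at h4
    have h6 : u c ^ s * R ≤ u c ^ s * R ^ 2 :=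
      mul_le_mul_of_nonneg_left (by nlinarith) (Real.rpow_nonneg (hnn c) s)
    linarith
  by_contra hne
  have hpos : 0 < u c ^ s := Real.rpow_pos_of_pos (lt_of_le_of_ne (hnn c) (Ne.symm hne)) s
  obtain ⟨n, hn⟩ := exists_nat_gt (A ^ s' * 3 ^ N / u c ^ s)
  rw [div_lt_iff₀ hpos] at hn
  have := key (n + 1) (by omega)
  push_cast at this
  linarith
end
end
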